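/- arXiv:2009.12709 — 5 statements merged into one kernel-verified Lean document; each statement's English description precedes it below -/
import Mathlib

section
/- (Poincaré inequality for semi-periodic functions.) Let F = ℂ^D (D ≥ 1) with its standard Hermitian inner product, let U be a unitary operator on F, and set λ₀(U) := inf{λ ∈ [0,1] : e^{iλπ} or e^{−iλπ} is an eigenvalue of U} (this set is nonempty since every eigenvalue of U has modulus 1). If ψ : ℝ → F is continuously differentiable on [0, π] and satisfies the semi-periodic boundary condition ψ(π) = U ψ(0), then ∫₀^π ‖ψ′(φ)‖² dφ ≥ λ₀(U)² ∫₀^π ‖ψ(φ)‖² dφ. -/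
noncomputable section

/-- `λ₀(U) = inf { λ ∈ [0,1] : e^{iλπ} or e^{-iλπ} is an eigenvalue of U }`. -/
def lambda0 (D : ℕ)
    (U : EuclideanSpace ℂ (Fin D) →L[ℂ] EuclideanSpace ℂ (Fin D)) : ℝ :=
  sInf {l : ℝ | l ∈ Set.Icc (0 : ℝ) 1 ∧
    (Module.End.HasEigenvalue
        (↑U : EuclideanSpace ℂ (Fin D) →ₗ[ℂ] EuclideanSpace ℂ (Fin D))
        (Complex.exp (l * Real.pi * Complex.I)) ∨
     Module.End.HasEigenvalue
        (↑U : EuclideanSpace ℂ (Fin D) →ₗ[ℂ] EuclideanSpace ℂ (Fin D))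
        (Complex.exp (-(l * Real.pi) * Complex.I)))}

lemma mem_spec_iff (D : ℕ)
    (U : EuclideanSpace ℂ (Fin D) →L[ℂ] EuclideanSpace ℂ (Fin D)) (z : ℂ)
    (hz : z ∈ spectrum ℂ U) : Module.End.HasEigenvalue
        (↑U : EuclideanSpace ℂ (Fin D) →ₗ[ℂ] EuclideanSpace ℂ (Fin D)) z := by
  rw [Module.End.hasEigenvalue_iff_mem_spectrum]
  rw [spectrum.mem_iff] at hz ⊢
  intro h
  apply hz
  have h2 := h.map (Module.End.toContinuousLinearMap (𝕜 := ℂ) (EuclideanSpace ℂ (Fin D)))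
  convert h2 using 1
  ext v : 1
  rfl

lemma re_le_cos (D : ℕ)
    (U : EuclideanSpace ℂ (Fin D) →L[ℂ] EuclideanSpace ℂ (Fin D))
    (hU : U ∈ unitary (EuclideanSpace ℂ (Fin D) →L[ℂ] EuclideanSpace ℂ (Fin D)))
    (l : ℝ) (h0 : 0 ≤ l) (hl : l ≤ lambda0 D U) (z : ℂ) (hz : z ∈ spectrum ℂ U) :
    z.re ≤ Real.cos (l * Real.pi) := by
  have hn : ‖z‖ = 1 := by
    simpa using spectrum.subset_circle_of_unitary hU hz
  have he := mem_spec_iff D U z hz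
  have hpi := Real.pi_pos
  have hz' : Complex.exp (Complex.arg z * Complex.I) = z := by
    have := Complex.norm_mul_exp_arg_mul_I z
    simpa [hn] using this
  have hmem : lambda0 D U ≤ |Complex.arg z| / Real.pi := by
    apply csInf_le
    · exact ⟨0, fun x hx => hx.1.1⟩
    · refine ⟨⟨by positivity, ?_⟩, ?_⟩
      · rw [div_le_one hpi]; exact Complex.abs_arg_le_pi z
      · have hc : ((|Complex.arg z| / Real.pi : ℝ) : ℂ) * Real.pi = (|Complex.arg z| : ℝ) := by
          rw [← Complex.ofReal_mul, div_mul_cancel₀ _ hpi.ne']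
        rw [hc]
        rcases abs_choice (Complex.arg z) with h | h
        · left; rw [h, hz']; exact he
        · right; rw [h]; push_cast; rw [neg_neg, hz']; exact he
  have h1 : l * Real.pi ≤ |Complex.arg z| := by
    rw [← le_div_iff₀ hpi]; exact hl.trans hmem
  have h2 := Real.cos_le_cos_of_nonneg_of_le_pi (by positivity) (Complex.abs_arg_le_pi z) h1
  rw [Real.cos_abs] at h2
  have h3 : z.re = Real.cos (Complex.arg z) := by
    conv_lhs => rw [← hz']
    rw [Complex.exp_ofReal_mul_I_re]
  rw [h3]; exact h2

open ComplexOrder in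
lemma inner_le_cos (D : ℕ)
    (U : EuclideanSpace ℂ (Fin D) →L[ℂ] EuclideanSpace ℂ (Fin D))
    (hU : U ∈ unitary (EuclideanSpace ℂ (Fin D) →L[ℂ] EuclideanSpace ℂ (Fin D)))
    (l : ℝ) (h0 : 0 ≤ l) (hl : l ≤ lambda0 D U) (a : EuclideanSpace ℂ (Fin D)) :
    inner ℝ a (U a) ≤ Real.cos (l * Real.pi) * ‖a‖ ^ 2 := by
  have hnorm : IsStarNormal U := by
    rw [isStarNormal_iff, Commute, SemiconjBy, hU.1, hU.2]
  set c : ℝ := 2 * Real.cos (l * Real.pi) with hc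
  have hcfc : cfc (fun z : ℂ => (c : ℂ) - (z + star z)) U = algebraMap ℂ _ (c : ℂ) - (U + star U) := by
    rw [cfc_sub (a := U) (fun _ : ℂ => (c : ℂ)) (fun z : ℂ => z + star z), cfc_add (a := U) (fun z : ℂ => z) (fun z : ℂ => star z), cfc_const _ U, cfc_id' ℂ U, cfc_star_id (R := ℂ) U]
  have hpos : 0 ≤ algebraMap ℂ (EuclideanSpace ℂ (Fin D) →L[ℂ] EuclideanSpace ℂ (Fin D)) (c : ℂ) - (U + star U) := by
    rw [← hcfc]
    apply cfc_nonneg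
    intro z hz
    have := re_le_cos D U hU l h0 hl z hz
    have hzz : (z + star z) = ((2 * z.re : ℝ) : ℂ) := by
      have := Complex.add_conj z
      simpa using this
    rw [hzz, ← Complex.ofReal_sub, Complex.zero_le_real]
    linarith
  rw [ContinuousLinearMap.nonneg_iff_isPositive] at hpos
  have := hpos.re_inner_nonneg_right a
  have e : (algebraMap ℂ (EuclideanSpace ℂ (Fin D) →L[ℂ] EuclideanSpace ℂ (Fin D)) (c : ℂ)) a = (c:ℂ) • a := by
    simp [Algebra.algebraMap_eq_smul_one]
  rw [sub_apply, add_apply, e, inner_sub_right, inner_add_right,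
    inner_smul_right, ContinuousLinearMap.star_eq_adjoint, ContinuousLinearMap.adjoint_inner_right,
    inner_self_eq_norm_sq_to_K] at this
  have e2 : (inner ℂ (U a) a).re = (inner ℂ a (U a)).re := inner_re_symm (𝕜 := ℂ) _ _
  have e3 : inner ℝ a (U a) = (inner ℂ a (U a)).re := by
    simp [PiLp.inner_apply, Complex.inner, mul_comm]
  rw [e3]
  have e4 : ((c:ℂ) * ((‖a‖ : ℝ) : ℂ) ^ 2).re = c * ‖a‖ ^ 2 := by
    rw [← Complex.ofReal_pow, ← Complex.ofReal_mul, Complex.ofReal_re]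
  have e5 : ((c:ℂ) * ((‖a‖ : ℝ) : ℂ) ^ 2 - (inner ℂ a (U a) + inner ℂ (U a) a)).re
     = c * ‖a‖ ^ 2 - 2 * (inner ℂ a (U a)).re := by
    rw [Complex.sub_re, e4, Complex.add_re, e2]; ring
  have h6 : 0 ≤ c * ‖a‖ ^ 2 - 2 * (inner ℂ a (U a)).re := by
    rw [← e5]; exact this
  rw [hc] at h6
  linarith

lemma calib {E : Type*} [NormedAddCommGroup E] [InnerProductSpace ℝ E]
    (f f' : ℝ → E)
    (hdiff : ∀ t ∈ Set.Icc (0 : ℝ) Real.pi,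
      HasDerivWithinAt f (f' t) (Set.Icc (0 : ℝ) Real.pi) t)
    (hcont : ContinuousOn f' (Set.Icc (0 : ℝ) Real.pi))
    (l : ℝ) (h0 : 0 < l) (h1 : l < 1)
    (hn : ‖f Real.pi‖ = ‖f 0‖)
    (hin : inner ℝ (f 0) (f Real.pi) ≤ Real.cos (l * Real.pi) * ‖f 0‖ ^ 2) :
    l ^ 2 * ∫ t in (0 : ℝ)..Real.pi, ‖f t‖ ^ 2 ≤ ∫ t in (0 : ℝ)..Real.pi, ‖f' t‖ ^ 2 := by
  have hpi := Real.pi_pos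
  set C := Real.cos (l * (Real.pi / 2)) with hC
  set S := Real.sin (l * (Real.pi / 2)) with hS
  have hcosp : ∀ t ∈ Set.Icc (0 : ℝ) Real.pi, 0 < Real.cos (l * (t - Real.pi / 2)) := by
    intro t ht
    apply Real.cos_pos_of_mem_Ioo
    constructor <;> nlinarith [ht.1, ht.2]
  have hCp : 0 < C := by
    have := hcosp Real.pi ⟨hpi.le, le_rfl⟩
    rwa [show Real.pi - Real.pi / 2 = Real.pi / 2 by ring] at this
  have hSp : 0 < S := by
    apply Real.sin_pos_of_pos_of_lt_pi <;> nlinarith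
  have hCS : S ^ 2 + C ^ 2 = 1 := Real.sin_sq_add_cos_sq _
  set c : E := (l / (2 * S)) • (f Real.pi - f 0) with hc
  let u : ℝ → ℝ := fun t => Real.cos (l * (t - Real.pi / 2))
  let s : ℝ → ℝ := fun t => Real.sin (l * (t - Real.pi / 2))
  let g : ℝ → ℝ := fun t => - (l * s t / u t * inner ℝ (f t) (f t)) + 2 * (inner ℝ (f t) c / u t)
    - ‖c‖ ^ 2 * (s t / u t / l)
  let g' : ℝ → ℝ := fun t => ‖f' t‖ ^ 2 - l ^ 2 * ‖f t‖ ^ 2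
    - ‖f' t + (l * s t / u t) • f t - (1 / u t) • c‖ ^ 2
  have hlin : ∀ t, HasDerivAt (fun t : ℝ => l * (t - Real.pi / 2)) l t := by
    intro t
    simpa using ((hasDerivAt_id t).sub_const (Real.pi / 2)).const_mul l
  have hu : ∀ t, HasDerivAt u (- s t * l) t := fun t => (hlin t).cos
  have hs : ∀ t, HasDerivAt s (u t * l) t := fun t => (hlin t).sin
  have hg : ∀ t ∈ Set.Icc (0 : ℝ) Real.pi,
      HasDerivWithinAt g (g' t) (Set.Icc (0 : ℝ) Real.pi) t := by
    intro t ht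
    have hup : u t ≠ 0 := (hcosp t ht).ne'
    have hus : s t ^ 2 + u t ^ 2 = 1 := Real.sin_sq_add_cos_sq _
    have d1 := (hu t).hasDerivWithinAt (s := Set.Icc (0 : ℝ) Real.pi)
    have d2 := (hs t).hasDerivWithinAt (s := Set.Icc (0 : ℝ) Real.pi)
    have df := hdiff t ht
    have dff := df.inner ℝ df
    have dfc := df.inner ℝ (hasDerivWithinAt_const t (Set.Icc (0 : ℝ) Real.pi) c)
    have := ((((d2.const_mul l).div d1 hup).mul dff).neg.add ((dfc.div d1 hup).const_mul 2)).sub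
      (((d2.div d1 hup).div_const l).const_mul (‖c‖ ^ 2))
    refine this.congr_deriv ?_
    simp only [g']
    have ex : ‖f' t + (l * s t / u t) • f t - (1 / u t) • c‖ ^ 2 =
      ‖f' t‖ ^ 2 + (l * s t / u t) ^ 2 * ‖f t‖ ^ 2 + (1 / u t) ^ 2 * ‖c‖ ^ 2
      + 2 * (l * s t / u t) * inner ℝ (f t) (f' t) - 2 * (1 / u t) * inner ℝ (f' t) c
      - 2 * (l * s t / u t) * (1 / u t) * inner ℝ (f t) c := by
      rw [norm_sub_sq_real, norm_add_sq_real, norm_smul, norm_smul, inner_smul_right, inner_smul_right,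
        inner_add_left, inner_smul_left, real_inner_comm (f t) (f' t), mul_pow, mul_pow, Real.norm_eq_abs, Real.norm_eq_abs,
        sq_abs, sq_abs]
      simp only [conj_trivial]
      ring
    rw [ex, real_inner_comm (f t) (f' t), inner_zero_right, real_inner_self_eq_norm_sq]
    have hl0 := h0.ne'
    generalize inner ℝ (f t) (f' t) = X at *
    generalize inner ℝ (f' t) c = Y at *
    generalize inner ℝ (f t) c = Z at *
    generalize ‖f t‖ = A at *
    generalize ‖c‖ = B at *
    have hs2 : s t ^ 2 = 1 - u t ^ 2 := by linarith
    simp only [Pi.div_apply]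
    field_simp
    ring_nf
    simp only [hs2]
    ring_nf
  have hfc : ContinuousOn f (Set.Icc (0 : ℝ) Real.pi) := fun t ht => (hdiff t ht).continuousWithinAt
  have hF : ContinuousOn (fun t => ‖f t‖ ^ 2) (Set.Icc (0 : ℝ) Real.pi) := hfc.norm.pow 2
  have hF' : ContinuousOn (fun t => ‖f' t‖ ^ 2) (Set.Icc (0 : ℝ) Real.pi) := hcont.norm.pow 2
  have key : g Real.pi - g 0 ≤ ∫ t in (0 : ℝ)..Real.pi, (‖f' t‖ ^ 2 - l ^ 2 * ‖f t‖ ^ 2) := by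
    apply intervalIntegral.sub_le_integral_of_hasDeriv_right_of_le (g' := g') hpi.le
    · exact fun t ht => (hg t ht).continuousWithinAt
    · intro t ht
      exact ((hg t ⟨ht.1.le, ht.2.le⟩).hasDerivAt (Icc_mem_nhds ht.1 ht.2)).hasDerivWithinAt
    · exact (hF'.sub (hF.const_mul (l ^ 2))).integrableOn_Icc
    · intro t ht
      simp only [g']
      nlinarith [sq_nonneg ‖f' t + (l * s t / u t) • f t - (1 / u t) • c‖]
  have i1 : IntervalIntegrable (fun t => ‖f t‖ ^ 2) MeasureTheory.volume 0 Real.pi :=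
    ContinuousOn.intervalIntegrable_of_Icc hpi.le hF
  have i2 : IntervalIntegrable (fun t => ‖f' t‖ ^ 2) MeasureTheory.volume 0 Real.pi :=
    ContinuousOn.intervalIntegrable_of_Icc hpi.le hF'
  rw [intervalIntegral.integral_sub i2 (i1.const_mul _), intervalIntegral.integral_const_mul] at key
  suffices 0 ≤ g Real.pi - g 0 by linarith
  have u1 : u Real.pi = C := by simp only [u, hC]; congr 1; ring
  have u0 : u 0 = C := by
    simp only [u, hC]; rw [← Real.cos_neg]; congr 1; ring
  have s1 : s Real.pi = S := by simp only [s, hS]; congr 1; ring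
  have s0 : s 0 = -S := by
    simp only [s, hS]; rw [← Real.sin_neg]; congr 1; ring
  have hcos : Real.cos (l * Real.pi) = 1 - 2 * S ^ 2 := by
    rw [show l * Real.pi = 2 * (l * (Real.pi / 2)) by ring, Real.cos_two_mul, ← hC]; linarith
  have hd : ‖f Real.pi - f 0‖ ^ 2 = 2 * ‖f 0‖ ^ 2 - 2 * inner ℝ (f 0) (f Real.pi) := by
    rw [norm_sub_sq_real, hn, real_inner_comm]; ring
  have hge : 4 * S ^ 2 * ‖f 0‖ ^ 2 ≤ ‖f Real.pi - f 0‖ ^ 2 := by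
    rw [hd]; rw [hcos] at hin; linarith
  have hcn : ‖c‖ ^ 2 = (l / (2 * S)) ^ 2 * ‖f Real.pi - f 0‖ ^ 2 := by
    rw [hc, norm_smul, mul_pow, Real.norm_eq_abs, sq_abs]
  have hic : inner ℝ (f Real.pi) c - inner ℝ (f 0) c = (l / (2 * S)) * ‖f Real.pi - f 0‖ ^ 2 := by
    rw [← inner_sub_left, hc, inner_smul_right, real_inner_self_eq_norm_sq]
  have eq : g Real.pi - g 0 = l / (2 * S * C) * (‖f Real.pi - f 0‖ ^ 2 - 4 * S ^ 2 * ‖f 0‖ ^ 2) := by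
    simp only [g, u1, u0, s1, s0, real_inner_self_eq_norm_sq, hn, hcn]
    rw [sub_eq_iff_eq_add] at hic
    rw [hic]
    have := hSp.ne'
    have := hCp.ne'
    have := h0.ne'
    field_simp
    ring
  rw [eq]
  exact mul_nonneg (by positivity) (by linarith)


/-- **Poincaré inequality for semi-periodic functions.**
If `ψ : ℝ → ℂ^D` is continuously differentiable on `[0, π]` (with derivative `ψ'`) and
satisfies the semi-periodic boundary condition `ψ(π) = U ψ(0)` for a unitary operator `U`,
then `∫₀^π ‖ψ'‖² ≥ λ₀(U)² ∫₀^π ‖ψ‖²`. -/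
theorem poincare_semiperiodic (D : ℕ) (hD : 1 ≤ D)
    (U : EuclideanSpace ℂ (Fin D) →L[ℂ] EuclideanSpace ℂ (Fin D))
    (hU : U ∈ unitary (EuclideanSpace ℂ (Fin D) →L[ℂ] EuclideanSpace ℂ (Fin D)))
    (ψ ψ' : ℝ → EuclideanSpace ℂ (Fin D))
    (hdiff : ∀ t ∈ Set.Icc (0 : ℝ) Real.pi,
      HasDerivWithinAt ψ (ψ' t) (Set.Icc (0 : ℝ) Real.pi) t)
    (hcont : ContinuousOn ψ' (Set.Icc (0 : ℝ) Real.pi))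
    (hbc : ψ Real.pi = U (ψ 0)) :
    lambda0 D U ^ 2 * ∫ φ in (0 : ℝ)..Real.pi, ‖ψ φ‖ ^ 2 ≤
      ∫ φ in (0 : ℝ)..Real.pi, ‖ψ' φ‖ ^ 2 := by
  have hn : ‖ψ Real.pi‖ = ‖ψ 0‖ := by
    rw [hbc]
    exact ContinuousLinearMap.norm_map_of_mem_unitary hU (ψ 0)
  have hnn : 0 ≤ lambda0 D U := Real.sInf_nonneg fun x hx => hx.1.1
  have hle : lambda0 D U ≤ 1 := by
    rcases Set.eq_empty_or_nonempty {l : ℝ | l ∈ Set.Icc (0 : ℝ) 1 ∧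
      (Module.End.HasEigenvalue
        (↑U : EuclideanSpace ℂ (Fin D) →ₗ[ℂ] EuclideanSpace ℂ (Fin D))
        (Complex.exp (l * Real.pi * Complex.I)) ∨
       Module.End.HasEigenvalue
        (↑U : EuclideanSpace ℂ (Fin D) →ₗ[ℂ] EuclideanSpace ℂ (Fin D))
        (Complex.exp (-(l * Real.pi) * Complex.I)))} with h | ⟨x, hx⟩
    · unfold lambda0; rw [h, Real.sInf_empty]; exact zero_le_one
    · exact (csInf_le ⟨0, fun y hy => hy.1.1⟩ hx).trans hx.1.2
  rcases hnn.eq_or_lt with h | hpos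
  · rw [← h]
    simp only [ne_eq, OfNat.ofNat_ne_zero, not_false_eq_true, zero_pow, zero_mul]
    exact intervalIntegral.integral_nonneg Real.pi_pos.le fun t _ => by positivity
  · have main : ∀ l ∈ Set.Ioo 0 (lambda0 D U),
        l ^ 2 * ∫ φ in (0 : ℝ)..Real.pi, ‖ψ φ‖ ^ 2 ≤ ∫ φ in (0 : ℝ)..Real.pi, ‖ψ' φ‖ ^ 2 := by
      intro l hl
      apply calib ψ ψ' hdiff hcont l hl.1 (hl.2.trans_le hle) hn
      rw [hbc]
      exact inner_le_cos D U hU l hl.1.le hl.2.le (ψ 0)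
    have ht : Filter.Tendsto (fun l : ℝ => l ^ 2 * ∫ φ in (0 : ℝ)..Real.pi, ‖ψ φ‖ ^ 2)
        (nhdsWithin (lambda0 D U) (Set.Iio (lambda0 D U)))
        (nhds (lambda0 D U ^ 2 * ∫ φ in (0 : ℝ)..Real.pi, ‖ψ φ‖ ^ 2)) :=
      ((continuous_id.pow 2).mul continuous_const).continuousWithinAt
    apply le_of_tendsto ht
    filter_upwards [Ioo_mem_nhdsLT hpos] with l hl using main l hl
end
end

section
/- (Covariant energy bound.) Fix d ≥ 1 and s > 0. Suppose that to every n ∈ ℕ and every half-open cube Q = Q(c, a) in ℝ^d there is assigned a nonnegative real number e_n(Q) such that: (scale covariance) e_n(Q(λc, λa)) = λ^{−2s} e_n(Q(c, a)) for all λ > 0; (translation invariance) e_n(Q(c + x, a)) = e_n(Q(c, a)) for all x ∈ ℝ^d; (superadditivity) for every finite collection of pairwise disjoint cubes Q_1, …, Q_J whose union is a cube Q, one has e_n(Q) ≥ min over all (n_1, …, n_J) ∈ ℕ^J with ∑_j n_j = n of ∑_{j=1}^J e_{n_j}(Q_j); (a priori positivity) there exists q ≥ 0 such that e_n(Q) >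 0 for all n ≥ q and all cubes Q. Then there exists a constant C > 0, independent of n and Q, such that e_n(Q) ≥ C |Q|^{−2s/d} n^{1+2s/d} for all n ≥ q and all cubes Q, where |Q(c, a)| = a^d. -/
/-- The half-open axis-parallel cube in `ℝ^d` with corner `c` and side length `a`. -/
def cube (d : ℕ) (c : Fin d → ℝ) (a : ℝ) : Set (Fin d → ℝ) :=
  {x | ∀ i, c i ≤ x i ∧ x i < c i + a}

theorem tile_disjoint (d K : ℕ) (f g : Fin d → Fin K) (h : f ≠ g) :
    Disjoint (cube d (fun i => ((f i : ℕ) : ℝ)) 1) (cube d (fun i => ((g i : ℕ) : ℝ)) 1) := by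
  rw [Set.disjoint_left]
  intro x hx hy
  apply h
  funext i
  obtain ⟨h1, h2⟩ := hx i
  obtain ⟨h3, h4⟩ := hy i
  apply Fin.ext
  have a1 : ((f i : ℕ) : ℝ) < (g i : ℕ) + 1 := by linarith
  have a2 : ((g i : ℕ) : ℝ) < (f i : ℕ) + 1 := by linarith
  norm_cast at a1 a2
  omega

theorem tile_union (d K : ℕ) :
    (⋃ f : Fin d → Fin K, cube d (fun i => ((f i : ℕ) : ℝ)) 1) = cube d 0 K := by
  ext x
  simp only [Set.mem_iUnion]
  constructor
  · rintro ⟨f, hf⟩ i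
    obtain ⟨h1, h2⟩ := hf i
    simp only at h1 h2
    have h3 : (((f i : ℕ) : ℝ)) + 1 ≤ K := by
      exact_mod_cast (f i).2
    have h4 : (0 : ℝ) ≤ ((f i : ℕ) : ℝ) := Nat.cast_nonneg _
    simp only [Pi.zero_apply]
    constructor <;> linarith
  · intro hx
    have hx1 : ∀ i, 0 ≤ x i := fun i => by simpa using (hx i).1
    have hx2 : ∀ i, x i < K := fun i => by simpa using (hx i).2
    refine ⟨fun i => ⟨⌊x i⌋₊, (Nat.floor_lt (hx1 i)).2 (hx2 i)⟩, fun i => ?_⟩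
    exact ⟨Nat.floor_le (hx1 i), Nat.lt_floor_add_one _⟩

/-- A positive sequence has a positive lower bound on a finite range. -/
theorem finite_lower (E : ℕ → ℝ) (q : ℕ) (hE : ∀ n ≥ q, 0 < E n) (N : ℕ) :
    ∃ c > 0, ∀ n, q ≤ n → n < N → c ≤ E n := by
  induction N with
  | zero => exact ⟨1, one_pos, fun n _ h => by omega⟩
  | succ N ih =>
    obtain ⟨c, hc, h⟩ := ih
    by_cases hq : q ≤ N
    · refine ⟨min c (E N), lt_min hc (hE N hq), fun n h1 h2 => ?_⟩
      rcases Nat.lt_succ_iff_lt_or_eq.1 h2 with h3 | h3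
      · exact (min_le_left _ _).trans (h n h1 h3)
      · subst h3; exact min_le_right _ _
    · exact ⟨c, hc, fun n h1 h2 => h n h1 (by omega)⟩

/-- The linear lower bound. -/
theorem linear_lower (E : ℕ → ℝ) (Q J : ℕ) (κ : ℝ) (hκ : 1 < κ)
    (h0 : ∀ n, 0 ≤ E n) (hE : ∀ n ≥ Q, 0 < E n)
    (hs : ∀ n : ℕ, ∃ ν : Fin J → ℕ, (∑ j, ν j) = n ∧ κ * (∑ j, E (ν j)) ≤ E n) :
    ∃ c > 0, ∀ n : ℕ, c * ((n : ℝ) - Q) ≤ E n := by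
  obtain ⟨N, hN⟩ := exists_nat_gt (κ * J * Q / (κ - 1))
  obtain ⟨c, hc, hlow⟩ := finite_lower E Q hE N
  have hNp : (0 : ℝ) < N := lt_of_le_of_lt
    (div_nonneg (by positivity) (by linarith)) hN
  have hκ1 : 0 < κ - 1 := by linarith
  rw [div_lt_iff₀ hκ1] at hN
  refine ⟨c / N, div_pos hc hNp, fun n => ?_⟩
  have hcN : 0 < c / N := div_pos hc hNp
  induction n using Nat.strong_induction_on with
  | _ n ih =>
  have hQ0 : (0 : ℝ) ≤ Q := Nat.cast_nonneg _
  rcases lt_or_ge n Q with h | h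
  · have : (n : ℝ) < Q := by exact_mod_cast h
    have h1 := h0 n
    nlinarith
  rcases lt_or_ge n N with h' | h'
  · have hn : (n : ℝ) < N := by exact_mod_cast h'
    calc c / N * ((n : ℝ) - Q) ≤ c / N * N := by gcongr; linarith
      _ = c := by field_simp
      _ ≤ E n := hlow n h h'
  obtain ⟨ν, hν, hle⟩ := hs n
  have hlt : ∀ j, ν j < n := by
    intro j
    have h1 : ν j ≤ n := hν ▸ Finset.single_le_sum (fun i _ => Nat.zero_le (ν i)) (Finset.mem_univ j)
    refine lt_of_le_of_ne h1 fun h2 => ?_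
    have h3 : E (ν j) ≤ ∑ j, E (ν j) :=
      Finset.single_le_sum (f := fun j => E (ν j)) (fun i _ => h0 (ν i)) (Finset.mem_univ j)
    rw [h2] at h3
    have := hE n h
    nlinarith
  have hsum : c / N * ((n : ℝ) - J * Q) ≤ ∑ j, E (ν j) := by
    calc c / N * ((n : ℝ) - J * Q) = ∑ j, c / N * ((ν j : ℝ) - Q) := by
          rw [← Finset.mul_sum, Finset.sum_sub_distrib, ← Nat.cast_sum, hν]
          simp
      _ ≤ _ := Finset.sum_le_sum fun j _ => ih _ (hlt j)
  have hn : (N : ℝ) ≤ n := by exact_mod_cast h'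
  calc c / N * ((n : ℝ) - Q) ≤ c / N * (κ * ((n : ℝ) - J * Q)) := by
        gcongr
        nlinarith
    _ = κ * (c / N * ((n : ℝ) - J * Q)) := by ring
    _ ≤ κ * ∑ j, E (ν j) := by gcongr
    _ ≤ E n := hle

/-- The power lower bound. -/
theorem power_lower (E : ℕ → ℝ) (d q : ℕ) (hd : 1 ≤ d) (s : ℝ) (hs : 0 < s)
    (h0 : ∀ n, 0 ≤ E n) (hE : ∀ n ≥ q, 0 < E n)
    (hsup : ∀ K : ℕ, 1 ≤ K → ∀ n : ℕ, ∃ ν : Fin (K ^ d) → ℕ, (∑ j, ν j) = n ∧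
      (K : ℝ) ^ (2 * s) * (∑ j, E (ν j)) ≤ E n) :
    ∃ C > 0, ∀ n ≥ q, C * (n : ℝ) ^ (1 + 2 * s / d) ≤ E n := by
  have hd0 : (0 : ℝ) < d := by exact_mod_cast hd
  obtain ⟨c, hc, hlin⟩ := linear_lower E (q + 1) (2 ^ d) ((2 : ℕ) ^ (2 * s))
    (Real.one_lt_rpow (by norm_num) (by linarith)) h0 (fun n hn => hE n (by omega))
    (hsup 2 (by norm_num))
  obtain ⟨c0, hc0, hlow⟩ := finite_lower E q hE (2 * (q + 1))
  set M : ℝ := 2 * ((q : ℝ) + 1) with hM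
  have hMp : 0 < M := by positivity
  have hp : 0 < 1 + 2 * s / d := by positivity
  set C1 : ℝ := c0 / M ^ (1 + 2 * s / d) with hC1
  set C2 : ℝ := c / 2 * (2 ^ (2 * s))⁻¹ * (M ^ (2 * s / d))⁻¹ with hC2
  have hC1p : 0 < C1 := by positivity
  have hC2p : 0 < C2 := by positivity
  refine ⟨min C1 C2, lt_min hC1p hC2p, fun n hn => ?_⟩
  rcases lt_or_ge n (2 * (q + 1)) with h | h
  · have hnM : (n : ℝ) ≤ M := by rw [hM]; exact_mod_cast h.le
    calc min C1 C2 * (n : ℝ) ^ (1 + 2 * s / d) ≤ C1 * M ^ (1 + 2 * s / d) := by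
          gcongr; exact min_le_left _ _
      _ = c0 := by rw [hC1]; field_simp
      _ ≤ E n := hlow n hn h
  have hnM : M ≤ (n : ℝ) := by rw [hM]; exact_mod_cast h
  have hn0 : (0 : ℝ) < n := by linarith
  set x : ℝ := ((n : ℝ) / M) ^ (1 / (d : ℝ)) with hx
  have hx1 : 1 ≤ x := Real.one_le_rpow ((one_le_div hMp).2 hnM) (by positivity)
  have hxd : x ^ d = (n : ℝ) / M := by
    rw [hx, ← Real.rpow_natCast, ← Real.rpow_mul (by positivity), one_div,
      inv_mul_cancel₀ hd0.ne', Real.rpow_one]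
  have hK1 : 1 ≤ ⌊x⌋₊ := (Nat.one_le_floor_iff x).2 hx1
  have hKx : (⌊x⌋₊ : ℝ) ≤ x := Nat.floor_le (by linarith)
  have hKx2 : x / 2 ≤ (⌊x⌋₊ : ℝ) := by
    have h1 := Nat.lt_floor_add_one x
    have h2 : (1 : ℝ) ≤ (⌊x⌋₊ : ℝ) := by exact_mod_cast hK1
    linarith
  obtain ⟨ν, hν, hle⟩ := hsup ⌊x⌋₊ hK1 n
  generalize ⌊x⌋₊ = K at *
  have hKd : (K : ℝ) ^ d ≤ (n : ℝ) / M := hxd ▸ pow_le_pow_left₀ (by positivity) hKx d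
  have hsum : c * ((n : ℝ) / 2) ≤ ∑ j, E (ν j) := by
    calc c * ((n : ℝ) / 2) ≤ c * ((n : ℝ) - (K : ℝ) ^ d * ((q : ℝ) + 1)) := by
          gcongr
          rw [le_div_iff₀ hMp, hM] at hKd
          linarith
      _ = ∑ j, c * ((ν j : ℝ) - ((q + 1 : ℕ) : ℝ)) := by
          rw [← Finset.mul_sum, Finset.sum_sub_distrib, ← Nat.cast_sum, hν]
          simp
          left
          ring
      _ ≤ _ := Finset.sum_le_sum fun j _ => hlin _
  have hxs : x ^ (2 * s) = (n : ℝ) ^ (2 * s / d) * (M ^ (2 * s / d))⁻¹ := by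
    rw [hx, ← Real.rpow_mul (by positivity), Real.div_rpow hn0.le hMp.le, div_eq_mul_inv]
    congr 2 <;> ring_nf
  calc min C1 C2 * (n : ℝ) ^ (1 + 2 * s / d) ≤ C2 * (n : ℝ) ^ (1 + 2 * s / d) := by
        gcongr; exact min_le_right _ _
    _ = (x / 2) ^ (2 * s) * (c * ((n : ℝ) / 2)) := by
        rw [Real.div_rpow (by linarith) (by norm_num), hxs, Real.rpow_add hn0, Real.rpow_one, hC2]
        ring
    _ ≤ (K : ℝ) ^ (2 * s) * ∑ j, E (ν j) := by
        gcongr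
    _ ≤ E n := hle

/-- **Covariant energy bound.**
If an assignment `(n, Q) ↦ e_n(Q) ≥ 0` of energies to particle numbers and cubes is
scale-covariant of degree `-2s`, translation-invariant, superadditive over partitions of a
cube into subcubes, and positive for all `n ≥ q`, then `e_n(Q) ≥ C |Q|^{-2s/d} n^{1+2s/d}`
for all `n ≥ q`, with a constant `C > 0` independent of `n` and `Q`. -/
theorem covariant_energy_bound (d : ℕ) (hd : 1 ≤ d) (s : ℝ) (hs : 0 < s)
    (e : ℕ → (Fin d → ℝ) → ℝ → ℝ)
    (hnonneg : ∀ n (c : Fin d → ℝ) (a : ℝ), 0 < a → 0 ≤ e n c a)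
    (hscale : ∀ n (c : Fin d → ℝ) (a lam : ℝ), 0 < a → 0 < lam →
      e n (lam • c) (lam * a) = lam ^ (-(2 * s)) * e n c a)
    (htrans : ∀ n (c x : Fin d → ℝ) (a : ℝ), 0 < a → e n (c + x) a = e n c a)
    (hsuper : ∀ (J : ℕ) (c : Fin J → Fin d → ℝ) (a : Fin J → ℝ)
        (C : Fin d → ℝ) (A : ℝ), (∀ j, 0 < a j) → 0 < A →
        (Pairwise fun i j => Disjoint (cube d (c i) (a i)) (cube d (c j) (a j))) →
        (⋃ j, cube d (c j) (a j)) = cube d C A →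
        ∀ n : ℕ, ∃ ν : Fin J → ℕ, (∑ j, ν j) = n ∧
          (∑ j, e (ν j) (c j) (a j)) ≤ e n C A)
    (q : ℕ) (hpos : ∀ n ≥ q, ∀ (c : Fin d → ℝ) (a : ℝ), 0 < a → 0 < e n c a) :
    ∃ C > 0, ∀ n ≥ q, ∀ (c : Fin d → ℝ) (a : ℝ), 0 < a →
      C * (a ^ d) ^ (-(2 * s / d)) * (n : ℝ) ^ (1 + 2 * s / d) ≤ e n c a := by
  have key : ∀ n (c : Fin d → ℝ) (a : ℝ), 0 < a → e n c a = a ^ (-(2 * s)) * e n 0 1 := by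
    intro n c a ha
    have h1 := hscale n 0 1 a one_pos ha
    have h2 := htrans n 0 c a ha
    rw [smul_zero, mul_one] at h1
    rw [zero_add] at h2
    rw [h2, h1]
  obtain ⟨C, hC, h⟩ := power_lower (fun n => e n 0 1) d q hd s hs
    (fun n => hnonneg n 0 1 one_pos) (fun n hn => hpos n hn 0 1 one_pos) (by
      intro K hK n
      have hK0 : (0 : ℝ) < K := by exact_mod_cast hK
      let φ : Fin (K ^ d) ≃ (Fin d → Fin K) := finFunctionFinEquiv.symm
      obtain ⟨ν, hν, hle⟩ := hsuper (K ^ d) (fun j i => ((φ j i : ℕ) : ℝ)) (fun _ => 1) 0 K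
        (fun _ => one_pos) hK0
        (fun i j hij => tile_disjoint d K (φ i) (φ j) (fun h => hij (φ.injective h)))
        (by
          rw [← tile_union d K]
          exact φ.surjective.iUnion_comp
            (fun f : Fin d → Fin K => cube d (fun i => ((f i : ℕ) : ℝ)) 1)) n
      refine ⟨ν, hν, ?_⟩
      rw [key n 0 K hK0, Finset.sum_congr rfl (fun j _ => key (ν j) _ 1 one_pos)] at hle
      simp only [Real.one_rpow, one_mul] at hle
      calc (K : ℝ) ^ (2 * s) * ∑ j, e (ν j) 0 1
          ≤ (K : ℝ) ^ (2 * s) * ((K : ℝ) ^ (-(2 * s)) * e n 0 1) := by gcongr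
        _ = e n 0 1 := by
          rw [← mul_assoc, ← Real.rpow_add hK0]
          simp)
  refine ⟨C, hC, fun n hn c a ha => ?_⟩
  have hd0 : (d : ℝ) ≠ 0 := by
    have : d ≠ 0 := by omega
    exact_mod_cast this
  have hpow : (a ^ d) ^ (-(2 * s / d)) = a ^ (-(2 * s)) := by
    rw [← Real.rpow_natCast, ← Real.rpow_mul ha.le]
    congr 1
    field_simp
  rw [key n c a ha, hpow]
  calc C * a ^ (-(2 * s)) * (n : ℝ) ^ (1 + 2 * s / d)
      = a ^ (-(2 * s)) * (C * (n : ℝ) ^ (1 + 2 * s / d)) := by ring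
    _ ≤ _ := mul_le_mul_of_nonneg_left (h n hn) (by positivity)
end

section
/- (Covering lemma.) Let d ≥ 1 and let f : ℝ^d → ℝ be measurable with 0 ≤ f, integrable, with compact support, and suppose ∫_{ℝ^d} f ≥ Λ for some Λ > 0. Then the support of f can be covered by a countable collection {Q_i} of pairwise disjoint half-open cubes in ℝ^d such that ∫_{Q_i} f ≤ Λ for every i, and such that for all a > 0 and all q with 0 ≤ q < Λ 2^{−d}, setting b := (1 − 2^d q/Λ)(2^{da} − 1)/(2^{da} + 2^d − 2) > 0, one has the inequality of (extended-nonnegative-real-valued) sums ∑_i |Q_i|^{−a} (∫_{Q_i} f − q)_+ ≥ b · ∑_i |Q_i|^{−a} ∫_{Q_i} f, where (t)_+ := max{t, 0}. -/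
open MeasureTheory

lemma node_step {σ : Type} [Fintype σ] (m S T : σ → ℝ) (K Λ q b θ w v : ℝ)
    (hK : (Fintype.card σ : ℝ) = K) (hΛ : 0 < Λ) (hq : 0 ≤ q) (hb : 0 ≤ b) (hbθ : b ≤ θ)
    (hθ : θ = 1 - K * q / Λ) (hw : 1 < w) (hbal : (w - 1) * (θ - b) = b * (K - 1))
    (hv : 0 < v) (hm : Λ < ∑ s, m s)
    (h : ∀ s, (m s ≤ Λ ∧ S s = v * max (m s - q) 0 ∧ T s = v * m s) ∨
      b * T s + w * (θ - b) * Λ * v ≤ S s) :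
    b * ∑ s, T s + (θ - b) * Λ * v ≤ ∑ s, S s := by
  classical
  by_cases hall : ∀ s, S s = v * max (m s - q) 0 ∧ T s = v * m s
  · have hT : ∑ s, T s = v * ∑ s, m s := by
      rw [Finset.mul_sum]; exact Finset.sum_congr rfl fun s _ => (hall s).2
    have hS : v * (∑ s, m s - K * q) ≤ ∑ s, S s := by
      have : v * (∑ s, m s - K * q) = ∑ s, v * (m s - q) := by
        rw [← Finset.mul_sum, Finset.sum_sub_distrib]
        simp [hK]
      rw [this]
      refine Finset.sum_le_sum fun s _ => ?_
      rw [(hall s).1]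
      exact mul_le_mul_of_nonneg_left (le_max_left _ _) hv.le
    refine le_trans ?_ hS
    rw [hT]
    set M := ∑ s, m s
    have hKq : K * q = (1 - θ) * Λ := by rw [hθ]; field_simp; ring
    have h1 : 0 ≤ 1 - θ := by
      have : 0 ≤ K * q := by rw [← hK]; positivity
      rw [hKq] at this
      exact nonneg_of_mul_nonneg_left this hΛ
    rw [hKq]
    have h2 : 0 ≤ v * (M - Λ) * (1 - b) := by
      apply mul_nonneg (mul_nonneg hv.le (by linarith)) (by linarith)
    nlinarith
  · push Not at hall
    obtain ⟨s0, hs0⟩ := hall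
    have h0 : b * T s0 + w * (θ - b) * Λ * v ≤ S s0 := by
      rcases h s0 with h' | h'
      · exact absurd h'.2.2 (hs0 h'.2.1)
      · exact h'
    have hge : ∀ s, -(b * v * Λ) ≤ S s - b * T s := by
      intro s
      rcases h s with ⟨h1, h2, h3⟩ | h'
      · rw [h2, h3]
        have : 0 ≤ v * max (m s - q) 0 := mul_nonneg hv.le (le_max_right _ _)
        have : 0 ≤ b * v * (Λ - m s) := mul_nonneg (mul_nonneg hb hv.le) (by linarith)
        linarith
      · have : 0 ≤ w * (θ - b) * Λ * v := by
          have : 0 ≤ θ - b := by linarith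
          positivity
        have : 0 ≤ b * v * Λ := by positivity
        linarith
    have hsum : w * (θ - b) * Λ * v - (K - 1) * (b * v * Λ) ≤ ∑ s, (S s - b * T s) := by
      rw [← Finset.add_sum_erase _ _ (Finset.mem_univ s0)]
      have : (Finset.univ.erase s0).card • (-(b * v * Λ)) ≤
          ∑ s ∈ Finset.univ.erase s0, (S s - b * T s) :=
        Finset.card_nsmul_le_sum _ _ _ fun s _ => hge s
      have hc : ((Finset.univ.erase s0).card : ℝ) = K - 1 := by
        rw [Finset.card_erase_of_mem (Finset.mem_univ s0), Finset.card_univ, ← hK,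
          Nat.cast_sub (Fintype.card_pos_iff.2 ⟨s0⟩)]
        simp
      rw [nsmul_eq_mul, hc] at this
      linarith
    rw [Finset.sum_sub_distrib, ← Finset.mul_sum] at hsum
    have : w * (θ - b) * Λ * v - (K - 1) * (b * v * Λ) = (θ - b) * Λ * v := by
      linear_combination Λ * v * hbal
    linarith

lemma cube_eq_pi (d : ℕ) (c : Fin d → ℝ) (a : ℝ) :
    cube d c a = Set.pi Set.univ fun i => Set.Ico (c i) (c i + a) := by
  ext x; simp [cube]

lemma cube_meas (d : ℕ) (c : Fin d → ℝ) (a : ℝ) : MeasurableSet (cube d c a) := by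
  rw [cube_eq_pi]; exact MeasurableSet.univ_pi fun i => measurableSet_Ico

lemma cube_vol (d : ℕ) (c : Fin d → ℝ) (a : ℝ) :
    volume (cube d c a) = ENNReal.ofReal a ^ d := by
  rw [cube_eq_pi, Real.volume_pi_Ico]; simp

noncomputable def subc {d : ℕ} (c : Fin d → ℝ) (a : ℝ) (s : Fin d → Bool) : Fin d → ℝ :=
  fun i => c i + if s i then a / 2 else 0

lemma subc_disj {d : ℕ} (c : Fin d → ℝ) (a : ℝ) {s t : Fin d → Bool} (hst : s ≠ t) :
    Disjoint (cube d (subc c a s) (a / 2)) (cube d (subc c a t) (a / 2)) := by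
  rw [Set.disjoint_left]
  intro x hx hy
  apply hst
  funext i
  have h1 := hx i
  have h2 := hy i
  simp only [subc] at h1 h2
  cases hs : s i <;> cases ht : t i <;> simp [hs, ht] at h1 h2 ⊢ <;> linarith

lemma subc_union {d : ℕ} (c : Fin d → ℝ) (a : ℝ) (ha : 0 < a) :
    ⋃ s, cube d (subc c a s) (a / 2) = cube d c a := by
  ext x
  simp only [Set.mem_iUnion]
  constructor
  · rintro ⟨s, hs⟩ i
    have h1 := hs i
    simp only [subc] at h1
    cases h : s i <;> simp [h] at h1 <;> constructor <;> linarith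
  · intro hx
    refine ⟨fun i => decide (c i + a / 2 ≤ x i), fun i => ?_⟩
    have h1 := hx i
    by_cases h : c i + a / 2 ≤ x i
    · simp only [subc, h, decide_true, if_true]; constructor; trivial; linarith
    · simp only [subc, h, decide_false]; push Not at h; constructor <;> simp <;> linarith

lemma vol_half (d : ℕ) (a p : ℝ) (ha : 0 < a) :
    ((a / 2) ^ d) ^ (-p) = (2 : ℝ) ^ ((d : ℝ) * p) * (a ^ d) ^ (-p) := by
  rw [div_pow, Real.div_rpow (by positivity) (by positivity), Real.rpow_mul (by norm_num),
    Real.rpow_natCast, Real.rpow_neg (x := (2:ℝ) ^ d) (by positivity), div_inv_eq_mul, mul_comm]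

/-- Data for a good finite decomposition of a cube. -/
lemma tree (d : ℕ) (f : (Fin d → ℝ) → ℝ) 
    (hint : Integrable f) (Λ : ℝ) (hΛ : 0 < Λ) (n : ℕ) :
    ∀ (c0 : Fin d → ℝ) (a0 : ℝ), 0 < a0 →
    (∀ c', (∫ x in cube d c' (a0 / 2 ^ n), f x) ≤ Λ) →
    ∃ (ι : Type) (_ : Fintype ι) (c : ι → Fin d → ℝ) (a : ι → ℝ),
      (∀ i, 0 < a i) ∧
      (Pairwise fun i j => Disjoint (cube d (c i) (a i)) (cube d (c j) (a j))) ∧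
      (⋃ i, cube d (c i) (a i)) = cube d c0 a0 ∧
      (∀ i, (∫ x in cube d (c i) (a i), f x) ≤ Λ) ∧
      (∀ p q b θ : ℝ, 0 < p → 0 ≤ q → 0 ≤ b → b ≤ θ → θ = 1 - 2 ^ d * q / Λ →
        1 < (2 : ℝ) ^ ((d : ℝ) * p) →
        ((2 : ℝ) ^ ((d : ℝ) * p) - 1) * (θ - b) = b * (2 ^ d - 1) →
        ((∫ x in cube d c0 a0, f x) ≤ Λ ∧
          ∑ i, (a i ^ d) ^ (-p) * max ((∫ x in cube d (c i) (a i), f x) - q) 0 =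
            (a0 ^ d) ^ (-p) * max ((∫ x in cube d c0 a0, f x) - q) 0 ∧
          ∑ i, (a i ^ d) ^ (-p) * (∫ x in cube d (c i) (a i), f x) =
            (a0 ^ d) ^ (-p) * (∫ x in cube d c0 a0, f x)) ∨
        b * ∑ i, (a i ^ d) ^ (-p) * (∫ x in cube d (c i) (a i), f x) +
          (2 : ℝ) ^ ((d : ℝ) * p) * (θ - b) * Λ * (a0 ^ d) ^ (-p) ≤
          ∑ i, (a i ^ d) ^ (-p) * max ((∫ x in cube d (c i) (a i), f x) - q) 0) := by
  have leaf : ∀ (c0 : Fin d → ℝ) (a0 : ℝ), 0 < a0 → (∫ x in cube d c0 a0, f x) ≤ Λ → _ :=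
    fun c0 a0 ha0 hm => (⟨Unit, inferInstance, fun _ => c0, fun _ => a0, fun _ => ha0,
      fun i j hij => absurd rfl hij, Set.iUnion_const _, fun _ => hm,
      fun p q b θ _ _ _ _ _ _ _ => Or.inl ⟨hm, by simp, by simp⟩⟩ :
      ∃ (ι : Type) (_ : Fintype ι) (c : ι → Fin d → ℝ) (a : ι → ℝ),
      (∀ i, 0 < a i) ∧
      (Pairwise fun i j => Disjoint (cube d (c i) (a i)) (cube d (c j) (a j))) ∧
      (⋃ i, cube d (c i) (a i)) = cube d c0 a0 ∧
      (∀ i, (∫ x in cube d (c i) (a i), f x) ≤ Λ) ∧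
      (∀ p q b θ : ℝ, 0 < p → 0 ≤ q → 0 ≤ b → b ≤ θ → θ = 1 - 2 ^ d * q / Λ →
        1 < (2 : ℝ) ^ ((d : ℝ) * p) →
        ((2 : ℝ) ^ ((d : ℝ) * p) - 1) * (θ - b) = b * (2 ^ d - 1) →
        ((∫ x in cube d c0 a0, f x) ≤ Λ ∧
          ∑ i, (a i ^ d) ^ (-p) * max ((∫ x in cube d (c i) (a i), f x) - q) 0 =
            (a0 ^ d) ^ (-p) * max ((∫ x in cube d c0 a0, f x) - q) 0 ∧
          ∑ i, (a i ^ d) ^ (-p) * (∫ x in cube d (c i) (a i), f x) =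
            (a0 ^ d) ^ (-p) * (∫ x in cube d c0 a0, f x)) ∨
        b * ∑ i, (a i ^ d) ^ (-p) * (∫ x in cube d (c i) (a i), f x) +
          (2 : ℝ) ^ ((d : ℝ) * p) * (θ - b) * Λ * (a0 ^ d) ^ (-p) ≤
          ∑ i, (a i ^ d) ^ (-p) * max ((∫ x in cube d (c i) (a i), f x) - q) 0))
  induction n with
  | zero =>
    intro c0 a0 ha0 h
    exact leaf c0 a0 ha0 (by simpa using h c0)
  | succ n ih =>
    intro c0 a0 ha0 h
    by_cases hm : (∫ x in cube d c0 a0, f x) ≤ Λ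
    · exact leaf c0 a0 ha0 hm
    push Not at hm
    have ih' := fun s : Fin d → Bool => ih (subc c0 a0 s) (a0 / 2) (by positivity) (by
      intro c'
      have := h c'
      rwa [pow_succ', ← div_div] at this)
    choose ι inst c a hpos hdis hun hle hmain using ih'
    have hsub : ∀ s i, cube d (c s i) (a s i) ⊆ cube d (subc c0 a0 s) (a0 / 2) := by
      intro s i
      rw [← hun s]
      exact Set.subset_iUnion (fun i => cube d (c s i) (a s i)) i
    have hmass : ∑ s, (∫ x in cube d (subc c0 a0 s) (a0 / 2), f x)
        = ∫ x in cube d c0 a0, f x := by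
      rw [← subc_union c0 a0 ha0, integral_iUnion_fintype]
      · exact fun s => cube_meas _ _ _
      · exact fun s t hst => subc_disj c0 a0 hst
      · exact fun s => hint.integrableOn
    refine ⟨(s : Fin d → Bool) × ι s, inferInstance, fun x => c x.1 x.2, fun x => a x.1 x.2,
      fun x => hpos x.1 x.2, ?_, ?_, fun x => hle x.1 x.2, ?_⟩
    · rintro ⟨s, i⟩ ⟨t, j⟩ hne
      by_cases hst : s = t
      · subst hst
        exact hdis s (fun h => hne (congrArg (Sigma.mk s) h))
      · exact (subc_disj c0 a0 hst).mono (hsub s i) (hsub t j)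
    · rw [← subc_union c0 a0 ha0, Set.iUnion_sigma]
      exact Set.iUnion_congr fun s => hun s
    · intro p q b θ hp hq hb hbθ hθ hw hbal
      right
      rw [Fintype.sum_sigma, Fintype.sum_sigma]
      have := node_step (fun s => ∫ x in cube d (subc c0 a0 s) (a0 / 2), f x)
        (fun s => ∑ i, (a s i ^ d) ^ (-p) * max ((∫ x in cube d (c s i) (a s i), f x) - q) 0)
        (fun s => ∑ i, (a s i ^ d) ^ (-p) * (∫ x in cube d (c s i) (a s i), f x))
        (2 ^ d) Λ q b θ ((2 : ℝ) ^ ((d : ℝ) * p)) (((a0 / 2) ^ d) ^ (-p))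
        (by simp) hΛ hq hb hbθ hθ hw hbal (by positivity) (by rw [hmass]; exact hm)
        (fun s => hmain s p q b θ hp hq hb hbθ hθ hw hbal)
      rw [vol_half d a0 p ha0] at this
      refine le_trans (le_of_eq ?_) this
      ring

lemma small_cubes (d : ℕ) (hd : 1 ≤ d) (f : (Fin d → ℝ) → ℝ) (hint : Integrable f)
    (Λ : ℝ) (hΛ : 0 < Λ) (a0 : ℝ) :
    ∃ n : ℕ, ∀ c', (∫ x in cube d c' (a0 / 2 ^ n), f x) ≤ Λ := by
  by_contra! hcon
  choose c' hc' using hcon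
  have ht : Filter.Tendsto (fun n : ℕ => ∫ x in cube d (c' n) (a0 / 2 ^ n), f x) Filter.atTop
      (nhds 0) := by
    refine hint.tendsto_setIntegral_nhds_zero ?_
    simp only [Function.comp_def, cube_vol]
    have h1 : Filter.Tendsto (fun n : ℕ => a0 / 2 ^ n) Filter.atTop (nhds 0) :=
      tendsto_const_nhds.div_atTop (tendsto_pow_atTop_atTop_of_one_lt (by norm_num))
    have h2 := ENNReal.Tendsto.pow (n := d) (ENNReal.tendsto_ofReal h1)
    rwa [ENNReal.ofReal_zero, zero_pow (by omega)] at h2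
  obtain ⟨n, hn⟩ := (ht.eventually (gt_mem_nhds hΛ)).exists
  exact absurd hn (not_lt.2 (hc' n).le)

lemma big_cube (d : ℕ) (f : (Fin d → ℝ) → ℝ) (hsupp : HasCompactSupport f) :
    ∃ R : ℝ, 0 < R ∧ Function.support f ⊆ cube d (fun _ => -R) (2 * R) := by
  obtain ⟨R, hR⟩ := hsupp.isCompact.isBounded.subset_closedBall (0 : Fin d → ℝ)
  refine ⟨|R| + 1, by positivity, fun x hx i => ?_⟩
  have h1 := hR (subset_tsupport f hx)
  rw [mem_closedBall_zero_iff] at h1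
  have h2 := (norm_le_pi_norm x i).trans h1
  rw [Real.norm_eq_abs, abs_le] at h2
  have := le_abs_self R
  constructor <;> linarith

lemma consts (d : ℕ) (hd : 1 ≤ d) (Λ : ℝ) (hΛ : 0 < Λ) (p q : ℝ) (hp : 0 < p)
    (hq : q < Λ / 2 ^ d) (b θ : ℝ) (hθ : θ = 1 - 2 ^ d * q / Λ)
    (hb : b = θ * ((2:ℝ) ^ ((d : ℝ) * p) - 1) / (2 ^ ((d : ℝ) * p) + 2 ^ d - 2)) :
    1 < (2 : ℝ) ^ ((d : ℝ) * p) ∧ 0 < b ∧ b ≤ θ ∧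
      ((2 : ℝ) ^ ((d : ℝ) * p) - 1) * (θ - b) = b * (2 ^ d - 1) := by
  have hw : 1 < (2 : ℝ) ^ ((d : ℝ) * p) :=
    Real.one_lt_rpow (by norm_num) (mul_pos (by exact_mod_cast hd) hp)
  have hK : (2 : ℝ) ≤ 2 ^ d := by
    calc (2 : ℝ) = 2 ^ 1 := by norm_num
      _ ≤ 2 ^ d := pow_le_pow_right₀ (by norm_num) hd
  generalize (2 : ℝ) ^ ((d : ℝ) * p) = w at *
  generalize (2 : ℝ) ^ d = K at *
  have hθ0 : 0 < θ := by
    rw [hθ, sub_pos, div_lt_one hΛ]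
    rw [lt_div_iff₀ (by linarith)] at hq
    linarith
  have hden : 0 < w + K - 2 := by linarith
  have hbe : b * (w + K - 2) = θ * (w - 1) := by rw [hb]; field_simp
  have hb0 : 0 < b := by
    rw [hb]; exact div_pos (mul_pos hθ0 (by linarith)) hden
  refine ⟨hw, hb0, ?_, by linarith⟩
  rw [hb, div_le_iff₀ hden]
  exact mul_le_mul_of_nonneg_left (by linarith) hθ0.le

theorem covering_lemma (d : ℕ) (hd : 1 ≤ d)
    (f : (Fin d → ℝ) → ℝ) (hmeas : Measurable f) (hnonneg : ∀ x, 0 ≤ f x)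
    (hint : Integrable f) (hsupp : HasCompactSupport f)
    (Λ : ℝ) (hΛ : 0 < Λ) (hmass : Λ ≤ ∫ x, f x) :
    ∃ (c : ℕ → Fin d → ℝ) (a : ℕ → ℝ),
      (∀ i, 0 < a i) ∧
      (Pairwise fun i j => Disjoint (cube d (c i) (a i)) (cube d (c j) (a j))) ∧
      (Function.support f ⊆ ⋃ i, cube d (c i) (a i)) ∧
      (∀ i, (∫ x in cube d (c i) (a i), f x) ≤ Λ) ∧
      (∀ p : ℝ, 0 < p → ∀ q : ℝ, 0 ≤ q → q < Λ / 2 ^ d →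
        0 < (1 - 2 ^ d * q / Λ) * (2 ^ ((d : ℝ) * p) - 1) /
            (2 ^ ((d : ℝ) * p) + 2 ^ d - 2) ∧
        ENNReal.ofReal ((1 - 2 ^ d * q / Λ) * (2 ^ ((d : ℝ) * p) - 1) /
              (2 ^ ((d : ℝ) * p) + 2 ^ d - 2)) *
            (∑' i, ENNReal.ofReal
              ((a i ^ d) ^ (-p) * ∫ x in cube d (c i) (a i), f x)) ≤
          ∑' i, ENNReal.ofReal
            ((a i ^ d) ^ (-p) * max ((∫ x in cube d (c i) (a i), f x) - q) 0)) := by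
  obtain ⟨R, hR, hsub⟩ := big_cube d f hsupp
  obtain ⟨n, hn⟩ := small_cubes d hd f hint Λ hΛ (2 * R)
  obtain ⟨ι, inst, c, a, hpos, hdis, hun, hle, hmain⟩ :=
    tree d f hint Λ hΛ n (fun _ => -R) (2 * R) (by positivity) hn
  have hm0 : ∫ x in cube d (fun _ => -R) (2 * R), f x = ∫ x, f x :=
    setIntegral_eq_integral_of_forall_compl_eq_zero fun x hx => by
      by_contra h
      exact hx (hsub h)
  have hsubi : ∀ i, cube d (c i) (a i) ⊆ cube d (fun _ => -R) (2 * R) := by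
    intro i
    rw [← hun]
    exact Set.subset_iUnion (fun i => cube d (c i) (a i)) i
  let i0 : Fin d := ⟨0, hd⟩
  let C : ι ⊕ ℕ → Fin d → ℝ := Sum.elim c (fun k _ => R + k)
  let A : ι ⊕ ℕ → ℝ := Sum.elim a (fun _ => 1)
  have hout : ∀ k : ℕ, Disjoint (cube d (fun _ => -R) (2 * R)) (cube d (fun _ => R + k) 1) := by
    intro k
    rw [Set.disjoint_left]
    intro x hx hy
    have h1 := (hx i0).2
    have h2 := (hy i0).1
    have : (0 : ℝ) ≤ k := k.cast_nonneg
    linarith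
  have hpad : ∀ k : ℕ, ∫ x in cube d (fun _ => R + k) 1, f x = 0 := by
    intro k
    refine setIntegral_eq_zero_of_forall_eq_zero fun x hx => ?_
    by_contra h
    exact Set.disjoint_left.1 (hout k) (hsub h) hx
  have hdis' : Pairwise fun i j => Disjoint (cube d (C i) (A i)) (cube d (C j) (A j)) := by
    rintro (i | k) (j | l) hne
    · exact hdis fun h => hne (by rw [h])
    · exact (hout l).mono_left (hsubi i)
    · exact ((hout k).mono_left (hsubi j)).symm
    · change Disjoint (cube d (fun _ => R + (k : ℝ)) 1) (cube d (fun _ => R + (l : ℝ)) 1)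
      rw [Set.disjoint_left]
      intro x hx hy
      apply hne
      have h1 := hx i0
      have h2 := hy i0
      have h3 : (k : ℝ) < l + 1 := by linarith
      have h4 : (l : ℝ) < k + 1 := by linarith
      norm_cast at h3 h4
      congr 1
      omega
  have hsumv : ∀ F : ι ⊕ ℕ → ENNReal, (∀ k, F (Sum.inr k) = 0) →
      ∑' x, F x = ∑ i, F (Sum.inl i) := by
    intro F hF
    rw [tsum_eq_sum (s := Finset.univ.map Function.Embedding.inl)]
    · simp
    · rintro (i | k) h
      · simp at h
      · exact hF k
  obtain ⟨e⟩ : Nonempty (ℕ ≃ ι ⊕ ℕ) := by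
    have : Countable ι := Finite.to_countable
    obtain ⟨hden⟩ := nonempty_denumerable (ι ⊕ ℕ)
    exact ⟨(Denumerable.eqv (ι ⊕ ℕ)).symm⟩
  refine ⟨fun i => C (e i), fun i => A (e i), ?_, ?_, ?_, ?_, ?_⟩
  · intro i
    beta_reduce
    rcases e i with j | k
    · exact hpos j
    · exact one_pos
  · exact fun i j hij => hdis' fun h => hij (e.injective h)
  · refine hsub.trans ?_
    rw [← hun]
    refine Set.iUnion_subset fun i => ?_
    have := Set.subset_iUnion (fun j => cube d (C (e j)) (A (e j))) (e.symm (Sum.inl i))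
    simp only [Equiv.apply_symm_apply] at this
    exact this
  · intro i
    beta_reduce
    rcases e i with j | k
    · exact hle j
    · exact (hpad k).le.trans hΛ.le
  · intro p hp q hq hqΛ
    obtain ⟨θ, hθ⟩ : ∃ θ, θ = 1 - 2 ^ d * q / Λ := ⟨_, rfl⟩
    rw [← hθ]
    obtain ⟨b, hb⟩ : ∃ b, b = θ * ((2:ℝ) ^ ((d : ℝ) * p) - 1) /
      (2 ^ ((d : ℝ) * p) + 2 ^ d - 2) := ⟨_, rfl⟩
    rw [← hb]
    obtain ⟨hw, hb0, hbθ, hbal⟩ := consts d hd Λ hΛ p q hp hqΛ b θ hθ hb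
    refine ⟨hb0, ?_⟩
    rw [e.tsum_eq (fun x => ENNReal.ofReal ((A x ^ d) ^ (-p) * ∫ x in cube d (C x) (A x), f x)),
      e.tsum_eq (fun x => ENNReal.ofReal
        ((A x ^ d) ^ (-p) * max ((∫ x in cube d (C x) (A x), f x) - q) 0)),
      hsumv _ (fun k => by simp [C, A, hpad]), hsumv _ (fun k => by simp [C, A, hpad, hq])]
    simp only [C, A, Sum.elim_inl]
    have hvn : ∀ i, 0 ≤ (a i ^ d) ^ (-p) := fun i =>
      Real.rpow_nonneg (pow_nonneg (hpos i).le _) _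
    rw [← ENNReal.ofReal_sum_of_nonneg, ← ENNReal.ofReal_sum_of_nonneg,
      ← ENNReal.ofReal_mul hb0.le]
    rotate_left
    · exact fun i _ => mul_nonneg (hvn i) (le_max_right _ _)
    · exact fun i _ => mul_nonneg (hvn i) (integral_nonneg hnonneg)
    refine ENNReal.ofReal_le_ofReal ?_
    have hV : 0 ≤ ((2 * R) ^ d) ^ (-p) := by positivity
    rcases hmain p q b θ hp hq hb0.le hbθ hθ hw hbal with ⟨h1, h2, h3⟩ | h
    · rw [h2, h3]
      rw [hm0] at h1 ⊢
      have hM : ∫ x, f x = Λ := le_antisymm h1 hmass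
      rw [hM, mul_left_comm]
      refine mul_le_mul_of_nonneg_left (le_trans ?_ (le_max_left _ _)) hV
      have hKq : θ * Λ = Λ - 2 ^ d * q := by rw [hθ]; field_simp
      have h5 : b * Λ ≤ θ * Λ := mul_le_mul_of_nonneg_right hbθ hΛ.le
      have h6 : 1 * q ≤ 2 ^ d * q :=
        mul_le_mul_of_nonneg_right (one_le_pow₀ (by norm_num)) hq
      linarith
    · refine le_trans ?_ h
      have : 0 ≤ (2 : ℝ) ^ ((d : ℝ) * p) * (θ - b) * Λ * ((2 * R) ^ d) ^ (-p) := by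
        have : 0 ≤ θ - b := by linarith
        positivity
      linarith
end

section
/- (Artin's theorem, planar case.) For every N ≥ 1, the fundamental group of the unordered configuration space C_N(ℝ²) of N distinct points in the plane, based at any point, is isomorphic to the braid group B_N: for every X ∈ C_N(ℝ²) there exists a group isomorphism FundamentalGroup(C_N(ℝ²), X) ≃ B_N. -/
open FreeGroup in
/-- The braid relations on generators `σ_0, …, σ_{n-1}` (0-indexed):
`σ_i σ_j = σ_j σ_i` for `|i - j| ≥ 2` and `σ_i σ_{i+1} σ_i = σ_{i+1} σ_i σ_{i+1}`. -/
def braidRels (n : ℕ) : Set (FreeGroup (Fin n)) :=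
  { r | (∃ i j : Fin n, i.val + 2 ≤ j.val ∧
          r = of i * of j * (of i)⁻¹ * (of j)⁻¹) ∨
        (∃ i j : Fin n, i.val + 1 = j.val ∧
          r = of i * of j * of i * (of j * of i * of j)⁻¹) }

/-- The braid group on `N` strands, presented by the braid relations. -/
abbrev BraidGroup (N : ℕ) : Type := PresentedGroup (braidRels (N - 1))

/-- The equivalence relation on injective tuples of `N` points of `ℝ^d` identifying tuples
that differ by a permutation of the labels. -/
def configSetoid (d N : ℕ) :
    Setoid {x : Fin N → Fin d → ℝ // Function.Injective x} where
  r x y := ∃ σ : Equiv.Perm (Fin N), y.1 = x.1 ∘ ⇑σ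
  iseqv := by
    refine ⟨fun x => ⟨Equiv.refl _, rfl⟩, ?_, ?_⟩
    · rintro x y ⟨σ, h⟩
      exact ⟨σ.symm, by rw [h]; funext i; simp⟩
    · rintro x y z ⟨σ, h⟩ ⟨τ, h'⟩
      exact ⟨τ.trans σ, by rw [h', h]; rfl⟩

/-- The unordered configuration space of `N` distinct points in `ℝ^d`, i.e. the quotient of
the space of injective `N`-tuples by the permutation action, with the quotient topology. -/
abbrev ConfigSpace (d N : ℕ) : Type := Quotient (configSetoid d N)

namespace ArtinBraid

/-! ### Combinatorics: lifting permutations to a group satisfying the braid relations -/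

/-- The adjacent transposition. -/
def adj {n : ℕ} (i : Fin n) : Equiv.Perm (Fin (n + 1)) := Equiv.swap i.castSucc i.succ

theorem adj_castSucc {n : ℕ} (i : Fin n) : adj i i.castSucc = i.succ := by simp [adj]
theorem adj_succ {n : ℕ} (i : Fin n) : adj i i.succ = i.castSucc := by simp [adj]
theorem adj_of_ne {n : ℕ} (i : Fin n) {k : Fin (n + 1)} (h1 : k ≠ i.castSucc) (h2 : k ≠ i.succ) :
    adj i k = k := Equiv.swap_apply_of_ne_of_ne h1 h2
theorem adj_mul_self {n : ℕ} (i : Fin n) : adj i * adj i = 1 := by simp [adj]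
theorem mul_adj_adj {n : ℕ} (w : Equiv.Perm (Fin (n + 1))) (i : Fin n) :
    w * adj i * adj i = w := by rw [mul_assoc, adj_mul_self, mul_one]

/-- A measure that grows with the number of inversions. -/
def weight {n : ℕ} (w : Equiv.Perm (Fin (n + 1))) : ℕ := ∑ k, (n - k.val) * (w k).val

theorem weight_adj {n : ℕ} (w : Equiv.Perm (Fin (n + 1))) (i : Fin n)
    (h : w i.succ < w i.castSucc) : weight (w * adj i) < weight w := by
  have key : (weight w : ℤ) - weight (w * adj i) =
      ∑ k, ((n : ℤ) - k.val) * ((w k).val - ((w * adj i) k).val) := by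
    simp only [weight]
    push_cast
    rw [← Finset.sum_sub_distrib]
    refine Finset.sum_congr rfl fun k _ => ?_
    have : k.val ≤ n := Nat.lt_succ_iff.mp k.2
    rw [Nat.cast_sub this]; ring
  rw [Fintype.sum_eq_add i.castSucc i.succ (by simp [Fin.ext_iff])] at key
  · simp only [Equiv.Perm.mul_apply, adj_castSucc, adj_succ, Fin.val_castSucc, Fin.val_succ] at key
    have h' : (w i.succ).val < (w i.castSucc).val := h
    push_cast at key
    have : (weight w : ℤ) - weight (w * adj i) = (w i.castSucc).val - (w i.succ).val := by
      rw [key]; ring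
    omega
  · rintro k ⟨h1, h2⟩
    simp [adj_of_ne i h1 h2]

theorem eq_one_of_no_descent {n : ℕ} (w : Equiv.Perm (Fin (n + 1)))
    (h : ¬ ∃ i : Fin n, w i.succ < w i.castSucc) : w = 1 := by
  push Not at h
  have hm : Monotone w := Fin.monotone_iff_le_succ.mpr h
  exact (Equiv.Perm.monotone_iff w).mp hm

section lift
variable {G : Type*} [Group G] {n : ℕ} (σ : Fin n → G)

open Classical in
/-- The lift of a permutation along a (chosen) reduced decomposition. -/
noncomputable def permLift (w : Equiv.Perm (Fin (n + 1))) : G :=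
  if h : ∃ i : Fin n, w i.succ < w i.castSucc then permLift (w * adj h.choose) * σ h.choose else 1
termination_by weight w
decreasing_by exact weight_adj w _ h.choose_spec

theorem permLift_one : permLift σ (1 : Equiv.Perm (Fin (n + 1))) = 1 := by
  rw [permLift, dif_neg]
  rintro ⟨i, hi⟩
  have : i.val + 1 < i.val := hi
  omega

theorem permLift_descent
    (hc : ∀ i j : Fin n, i.val + 2 ≤ j.val → σ i * σ j = σ j * σ i)
    (hb : ∀ i j : Fin n, i.val + 1 = j.val → σ i * σ j * σ i = σ j * σ i * σ j)
    (w : Equiv.Perm (Fin (n + 1))) (i : Fin n) (hi : w i.succ < w i.castSucc) :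
    permLift σ w = permLift σ (w * adj i) * σ i := by
  obtain ⟨k, hk⟩ : ∃ k, weight w = k := ⟨_, rfl⟩
  induction k using Nat.strong_induction_on generalizing w i with
  | _ k ih =>
  subst hk
  have ih' : ∀ (v : Equiv.Perm (Fin (n + 1))) (i : Fin n), weight v < weight w →
      v i.succ < v i.castSucc → permLift σ v = permLift σ (v * adj i) * σ i :=
    fun v i hv h => ih _ hv v i h rfl
  have hd : ∃ i : Fin n, w i.succ < w i.castSucc := ⟨i, hi⟩
  have hj := hd.choose_spec
  rw [permLift, dif_pos hd]
  generalize hd.choose = j at hj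
  -- commuting case
  have far : ∀ i j : Fin n, i.val + 2 ≤ j.val → w i.succ < w i.castSucc →
      w j.succ < w j.castSucc →
      permLift σ (w * adj j) * σ j = permLift σ (w * adj i) * σ i := by
    intro i j hij hi hj
    have e1 : adj j i.castSucc = i.castSucc :=
      adj_of_ne _ (by simp [Fin.ext_iff]; omega) (by simp [Fin.ext_iff]; omega)
    have e2 : adj j i.succ = i.succ :=
      adj_of_ne _ (by simp [Fin.ext_iff]; omega) (by simp [Fin.ext_iff]; omega)
    have e3 : adj i j.castSucc = j.castSucc :=
      adj_of_ne _ (by simp [Fin.ext_iff]; omega) (by simp [Fin.ext_iff]; omega)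
    have e4 : adj i j.succ = j.succ :=
      adj_of_ne _ (by simp [Fin.ext_iff]; omega) (by simp [Fin.ext_iff]; omega)
    rw [ih' (w * adj j) i (weight_adj w j hj) (by simpa [e1, e2] using hi),
      ih' (w * adj i) j (weight_adj w i hi) (by simpa [e3, e4] using hj)]
    have : w * adj j * adj i = w * adj i * adj j := by
      have hcomm : adj j * adj i = adj i * adj j := by
        rw [adj, adj]
        exact (Equiv.Perm.Disjoint.commute (Equiv.Perm.disjoint_swap_swap (by
          simp [Fin.ext_iff]; omega))).eq
      rw [mul_assoc, hcomm, mul_assoc]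
    rw [this, mul_assoc, hc i j hij, ← mul_assoc]
  have near : ∀ i j : Fin n, i.val + 1 = j.val → w i.succ < w i.castSucc →
      w j.succ < w j.castSucc →
      permLift σ (w * adj j) * σ j = permLift σ (w * adj i) * σ i := by
    intro i j hij hi hj
    have hm : j.castSucc = i.succ := by simp [Fin.ext_iff]; omega
    have a1 : adj j i.castSucc = i.castSucc :=
      adj_of_ne _ (by simp [Fin.ext_iff]; omega) (by simp [Fin.ext_iff]; omega)
    have a2 : adj j i.succ = j.succ := by rw [← hm, adj_castSucc]
    have a3 : adj j j.succ = i.succ := by rw [← hm, adj_succ]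
    have a4 : adj i j.succ = j.succ :=
      adj_of_ne _ (by simp [Fin.ext_iff]; omega) (by simp [Fin.ext_iff]; omega)
    have a5 := adj_castSucc i
    have a6 := adj_succ i
    rw [hm] at hj
    have b1 : (w * adj j) i.succ < (w * adj j) i.castSucc := by
      simp only [Equiv.Perm.mul_apply, a1, a2]; exact hj.trans hi
    have b2 : (w * adj j * adj i) j.succ < (w * adj j * adj i) j.castSucc := by
      simp only [Equiv.Perm.mul_apply, hm, a4, a3, a6, a1]; exact hi
    have b3 : (w * adj i) j.succ < (w * adj i) j.castSucc := by
      simp only [Equiv.Perm.mul_apply, hm, a4, a6]; exact hj.trans hi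
    have b4 : (w * adj i * adj j) i.succ < (w * adj i * adj j) i.castSucc := by
      simp only [Equiv.Perm.mul_apply, a2, a4, a1, a5]; exact hj
    have w1 := weight_adj w j (by rw [hm]; exact hj)
    have w2 := weight_adj w i hi
    have w3 := weight_adj _ _ b1
    have w4 := weight_adj _ _ b3
    rw [ih' _ i w1 b1, ih' _ j (w3.trans w1) b2, ih' _ j w2 b3, ih' _ i (w4.trans w2) b4]
    have : adj j * adj i * adj j = adj i * adj j * adj i := by
      ext k
      simp only [Equiv.Perm.mul_apply]
      by_cases k1 : k = i.castSucc
      · subst k1; rw [a1, a5, a2, a4]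
      by_cases k2 : k = i.succ
      · subst k2; rw [a2, a4, a3, a6, a1, a5]
      by_cases k3 : k = j.succ
      · subst k3; rw [a3, a6, a1, a4, a3, a6]
      · rw [adj_of_ne j (by rw [hm]; exact k2) k3, adj_of_ne i k1 k2,
          adj_of_ne j (by rw [hm]; exact k2) k3, adj_of_ne i k1 k2]
    have : w * adj j * adj i * adj j = w * adj i * adj j * adj i := by
      simpa only [mul_assoc] using congrArg (w * ·) this
    rw [this]
    have hb' := hb i j hij
    simp only [mul_assoc] at hb' ⊢
    rw [hb']
  rcases lt_trichotomy i.val j.val with h | h | h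
  · rcases Nat.lt_or_ge (i.val + 1) j.val with h' | h'
    · exact far i j h' hi hj
    · exact near i j (by omega) hi hj
  · rw [Fin.ext h]
  · rcases Nat.lt_or_ge (j.val + 1) i.val with h' | h'
    · exact (far j i h' hj hi).symm
    · exact (near j i (by omega) hj hi).symm

theorem permLift_mul_adj
    (hc : ∀ i j : Fin n, i.val + 2 ≤ j.val → σ i * σ j = σ j * σ i)
    (hb : ∀ i j : Fin n, i.val + 1 = j.val → σ i * σ j * σ i = σ j * σ i * σ j)
    (w : Equiv.Perm (Fin (n + 1))) (i : Fin n) (hi : w i.castSucc < w i.succ) :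
    permLift σ (w * adj i) = permLift σ w * σ i := by
  have h : (w * adj i) i.succ < (w * adj i) i.castSucc := by
    simpa [adj_castSucc, adj_succ] using hi
  rw [permLift_descent σ hc hb (w * adj i) i h, mul_adj_adj]

/-- Induction on the right by ascents. -/
theorem perm_ascent_induction {P : Equiv.Perm (Fin (n + 1)) → Prop} (h1 : P 1)
    (hs : ∀ (w : Equiv.Perm (Fin (n + 1))) (i : Fin n), w i.castSucc < w i.succ → P w →
      P (w * adj i)) (w : Equiv.Perm (Fin (n + 1))) : P w := by
  obtain ⟨k, hk⟩ : ∃ k, weight w = k := ⟨_, rfl⟩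
  induction k using Nat.strong_induction_on generalizing w with
  | _ k ih =>
  by_cases hd : ∃ i : Fin n, w i.succ < w i.castSucc
  · obtain ⟨i, hi⟩ := hd
    have hi' : (w * adj i) i.castSucc < (w * adj i) i.succ := by
      simpa [adj_castSucc, adj_succ] using hi
    have := hs (w * adj i) i hi'
      (ih _ (hk ▸ weight_adj w i hi) _ rfl)
    rwa [mul_adj_adj] at this
  · rw [eq_one_of_no_descent w hd]; exact h1

/-- If `w j < w (j+1)`-type adjacent swaps change the order of `a < b`, then `a = j`, `b = j+1`. -/
theorem adj_lt {j : Fin n} {a b : Fin (n + 1)} (h : a < b)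
    (hne : ¬ (a = j.castSucc ∧ b = j.succ)) : adj j a < adj j b := by
  simp only [adj, Equiv.swap_apply_def]
  simp only [Fin.ext_iff, Fin.lt_def, Fin.val_castSucc, Fin.val_succ] at *
  split_ifs <;> (try simp only [Fin.val_castSucc, Fin.val_succ]) <;> omega

theorem permLift_mul
    (hc : ∀ i j : Fin n, i.val + 2 ≤ j.val → σ i * σ j = σ j * σ i)
    (hb : ∀ i j : Fin n, i.val + 1 = j.val → σ i * σ j * σ i = σ j * σ i * σ j)
    (v w : Equiv.Perm (Fin (n + 1)))
    (h : ∀ a b, a < b → v b < v a → w⁻¹ a < w⁻¹ b) :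
    permLift σ (v * w) = permLift σ v * permLift σ w := by
  induction w using perm_ascent_induction with
  | h1 => rw [permLift_one, mul_one, mul_one]
  | hs w j hj ih =>
    have hinv : ∀ a, (w * adj j)⁻¹ a = adj j (w⁻¹ a) := by
      intro a
      rw [mul_inv_rev, Equiv.Perm.mul_apply]
      congr 1
    have hv : (v * w) j.castSucc < (v * w) j.succ := by
      by_contra hcon
      have hne : (v * w) j.castSucc ≠ (v * w) j.succ :=
        fun e => by
          have := (v * w).injective e
          simp [Fin.ext_iff] at this
      have hlt : v (w j.succ) < v (w j.castSucc) := lt_of_le_of_ne (not_lt.mp hcon) hne.symm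
      have := h _ _ hj hlt
      rw [hinv, hinv] at this
      have e1 : w⁻¹ (w j.castSucc) = j.castSucc := by simp
      have e2 : w⁻¹ (w j.succ) = j.succ := by simp
      rw [e1, e2, adj_castSucc, adj_succ] at this
      have : j.val + 1 < j.val := this
      omega
    rw [← mul_assoc, permLift_mul_adj σ hc hb _ j hv, permLift_mul_adj σ hc hb _ j hj, ih,
      mul_assoc]
    intro a b hab hvab
    have h1 := h a b hab hvab
    have h2 : w⁻¹ a = adj j ((w * adj j)⁻¹ a) := by
      rw [hinv, ← Equiv.Perm.mul_apply (adj j), adj_mul_self]; rfl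
    have h3 : w⁻¹ b = adj j ((w * adj j)⁻¹ b) := by
      rw [hinv, ← Equiv.Perm.mul_apply (adj j), adj_mul_self]; rfl
    rw [h2, h3]
    refine adj_lt h1 ?_
    rintro ⟨e1, e2⟩
    rw [e1, adj_castSucc] at h2
    rw [e2, adj_succ] at h3
    have e4 : a = w j.succ := by rw [← h2]; simp
    have e5 : b = w j.castSucc := by rw [← h3]; simp
    rw [e4, e5] at hab
    exact absurd hab (not_lt.mpr hj.le)

end lift
end ArtinBraid

namespace ArtinBraid
/-! ### Covers by simply connected sets through a common base point -/

open Topology Set unitInterval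

/-- An open cover of `X` by sets containing the base point `b`, each of which is
simply connected. -/
structure GoodCover {X : Type*} [TopologicalSpace X] (b : X) {ι : Type*} (U : ι → Set X) :
    Prop where
  isOpen : ∀ i, IsOpen (U i)
  cover : ∀ x, ∃ i, x ∈ U i
  base_mem : ∀ i, b ∈ U i
  joined : ∀ i x, x ∈ U i → ∃ γ : Path x b, ∀ t, γ t ∈ U i
  homotopic : ∀ i x y (γ γ' : Path x y), (∀ t, γ t ∈ U i) → (∀ t, γ' t ∈ U i) → γ.Homotopic γ'

theorem trans_mem {X : Type*} [TopologicalSpace X] {x y z : X} {γ : Path x y} {γ' : Path y z}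
    {s : Set X} (h : ∀ t, γ t ∈ s) (h' : ∀ t, γ' t ∈ s) (t : I) : (γ.trans γ') t ∈ s := by
  rw [Path.trans_apply]
  split_ifs
  · exact h _
  · exact h' _

theorem cast_trans {X : Type*} [TopologicalSpace X] {b z y c : X} (h0 : b = z)
    (q : Path.Homotopic.Quotient z y) (r : Path.Homotopic.Quotient y c) :
    (q.trans r).cast h0 rfl = (q.cast h0 rfl).trans r := by
  subst h0; simp only [Path.Homotopic.Quotient.cast_rfl_rfl]

namespace GoodCover
variable {X : Type*} [TopologicalSpace X] {b : X} {ι : Type*} {U : ι → Set X} (C : GoodCover b U)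

/-- The class of paths from `x` to the base point within `U i`. -/
noncomputable def ret (i : ι) (x : X) (hx : x ∈ U i) : Path.Homotopic.Quotient x b :=
  .mk (C.joined i x hx).choose

theorem trans_ret {i : ι} {x y : X} (γ : Path x y) (hγ : ∀ t, γ t ∈ U i) (hx : x ∈ U i)
    (hy : y ∈ U i) : (Path.Homotopic.Quotient.mk γ).trans (C.ret i y hy) = C.ret i x hx := by
  rw [ret, ret, ← Path.Homotopic.Quotient.mk_trans, Path.Homotopic.Quotient.eq]
  exact C.homotopic i _ _ _ _ (trans_mem hγ (C.joined i y hy).choose_spec)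
    (C.joined i x hx).choose_spec

theorem mk_eq {i : ι} {x y : X} (γ : Path x y) (hγ : ∀ t, γ t ∈ U i) (hx : x ∈ U i)
    (hy : y ∈ U i) : Path.Homotopic.Quotient.mk γ = (C.ret i x hx).trans (C.ret i y hy).symm := by
  rw [← C.trans_ret γ hγ hx hy, Path.Homotopic.Quotient.trans_assoc, Path.Homotopic.Quotient.trans_symm, Path.Homotopic.Quotient.trans_refl]

theorem ret_base (i : ι) (h : b ∈ U i) : C.ret i b h = .refl b := by
  rw [ret, ← Path.Homotopic.Quotient.mk_refl, Path.Homotopic.Quotient.eq]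
  exact C.homotopic i _ _ _ _ (C.joined i b h).choose_spec (fun _ => h)

/-- The loop which goes from the base point to `x` in `U j` and returns in `U i`. -/
noncomputable def loop (i j : ι) (x : X) (hi : x ∈ U i) (hj : x ∈ U j) : FundamentalGroup X b :=
  FundamentalGroup.fromPath ((C.ret j x hj).symm.trans (C.ret i x hi))

theorem loop_mul (i j k : ι) (x : X) (hi : x ∈ U i) (hj : x ∈ U j) (hk : x ∈ U k) :
    C.loop i j x hi hj * C.loop j k x hj hk = C.loop i k x hi hk := by
  rw [FundamentalGroup.mul_def]
  change ((C.ret k x hk).symm.trans (C.ret j x hj)).trans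
    ((C.ret j x hj).symm.trans (C.ret i x hi)) = (C.ret k x hk).symm.trans (C.ret i x hi)
  rw [Path.Homotopic.Quotient.trans_assoc, ← Path.Homotopic.Quotient.trans_assoc (C.ret j x hj), Path.Homotopic.Quotient.trans_symm,
    Path.Homotopic.Quotient.refl_trans]

theorem loop_self (i : ι) (x : X) (hi : x ∈ U i) : C.loop i i x hi hi = 1 := by
  exact mul_eq_left.mp (C.loop_mul i i i x hi hi hi)

theorem loop_inv (i j : ι) (x : X) (hi : x ∈ U i) (hj : x ∈ U j) :
    C.loop i j x hi hj = (C.loop j i x hj hi)⁻¹ := by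
  rw [eq_inv_iff_mul_eq_one, C.loop_mul, C.loop_self]

theorem loop_base (i j : ι) (hi : b ∈ U i) (hj : b ∈ U j) : C.loop i j b hi hj = 1 := by
  rw [loop, C.ret_base, C.ret_base, FundamentalGroup.one_def]
  exact Path.Homotopic.Quotient.symm_trans _

theorem loop_congr {i j : ι} {x y : X} (γ : Path x y) (hγi : ∀ t, γ t ∈ U i)
    (hγj : ∀ t, γ t ∈ U j) (hi : x ∈ U i) (hj : x ∈ U j) (hi' : y ∈ U i) (hj' : y ∈ U j) :
    C.loop i j x hi hj = C.loop i j y hi' hj' := by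
  rw [loop, loop, ← C.trans_ret γ hγi hi hi', ← C.trans_ret γ hγj hj hj']
  have : ((Path.Homotopic.Quotient.mk γ).trans (C.ret j y hj')).symm =
      (C.ret j y hj').symm.trans (Path.Homotopic.Quotient.mk γ).symm := by
    induction C.ret j y hj' using Path.Homotopic.Quotient.ind with
    | mk δ => rw [← Path.Homotopic.Quotient.mk_trans, ← Path.Homotopic.Quotient.mk_symm, Path.trans_symm]; rfl
  rw [this, Path.Homotopic.Quotient.trans_assoc, ← Path.Homotopic.Quotient.trans_assoc _ (Path.Homotopic.Quotient.mk γ), Path.Homotopic.Quotient.symm_trans,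
    Path.Homotopic.Quotient.refl_trans]

/-- The fundamental group is generated by the loops `C.loop i j x`. -/
theorem generated (S : Subgroup (FundamentalGroup X b))
    (hS : ∀ i j x hi hj, C.loop i j x hi hj ∈ S) : S = ⊤ := by
  rw [eq_top_iff]
  rintro g -
  obtain ⟨γ, rfl⟩ : ∃ γ : Path b b, FundamentalGroup.fromPath (Path.Homotopic.Quotient.mk γ) = g :=
    Path.Homotopic.Quotient.mk_surjective g
  obtain ⟨t, t0, tm, ⟨n, hn⟩, ht⟩ := exists_monotone_Icc_subset_open_cover_unitInterval
    (c := fun i => γ ⁻¹' U i) (fun i => (C.isOpen i).preimage γ.continuous)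
    (fun s _ => mem_iUnion.mpr (C.cover (γ s)))
  have key : ∀ m : ℕ, ∀ i (hi : γ (t m) ∈ U i) (h0 : b = γ (t 0)),
      FundamentalGroup.fromPath (((Path.Homotopic.Quotient.mk (γ.subpath (t 0) (t m))).trans
        (C.ret i _ hi)).cast h0 rfl) ∈ S := by
    intro m
    induction m with
    | zero =>
      intro i hi h0
      rw [Path.subpath_self, Path.Homotopic.Quotient.mk_refl, Path.Homotopic.Quotient.refl_trans]
      have : FundamentalGroup.fromPath ((C.ret i (γ (t 0)) hi).cast h0 rfl) = 1 := by
        clear hn ht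
        revert hi h0
        generalize γ (t 0) = z
        rintro hi rfl
        rw [C.ret_base]; rfl
      rw [this]; exact S.one_mem
    | succ m ih =>
      intro i hi h0
      obtain ⟨a, ha⟩ := ht m
      have hle := tm (Nat.le_succ m)
      have hm : γ (t m) ∈ U a := ha ⟨le_rfl, hle⟩
      have hm' : γ (t (m + 1)) ∈ U a := ha ⟨hle, le_rfl⟩
      have e1 : Path.Homotopic.Quotient.mk (γ.subpath (t 0) (t (m + 1))) =
          (Path.Homotopic.Quotient.mk (γ.subpath (t 0) (t m))).trans
            (Path.Homotopic.Quotient.mk (γ.subpath (t m) (t (m + 1)))) := by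
        rw [← Path.Homotopic.Quotient.mk_trans, eq_comm, Path.Homotopic.Quotient.eq]
        exact ⟨Path.Homotopy.subpathTransSubpath γ _ _ _⟩
      have e2 := C.mk_eq (γ.subpath (t m) (t (m + 1))) (i := a) (fun s => by
        have : γ.subpath (t m) (t (m + 1)) s ∈ range (γ.subpath (t m) (t (m + 1))) := ⟨s, rfl⟩
        rw [Path.range_subpath_of_le _ _ _ hle] at this
        obtain ⟨s', hs', e⟩ := this
        rw [← e]; exact ha hs') hm hm'
      have := S.mul_mem (hS i a _ hi hm') (ih a hm h0)
      convert this using 1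
      rw [FundamentalGroup.mul_def, e1, e2]
      rw [cast_trans, cast_trans, cast_trans]
      generalize (Path.Homotopic.Quotient.mk (γ.subpath (t 0) (t m))).cast h0 rfl = q
      change _ = Path.Homotopic.Quotient.trans (Path.Homotopic.Quotient.trans _ _) (Path.Homotopic.Quotient.trans _ _)
      simp only [Path.Homotopic.Quotient.trans_assoc]
  have h1 : γ (t n) = b := by rw [hn n le_rfl]; simp
  have h0 : b = γ (t 0) := by rw [t0]; simp
  obtain ⟨i, hi⟩ := C.cover (γ (t n))
  have := key n i hi h0
  convert this using 1
  have e : Path.Homotopic.Quotient.mk γ = ((Path.Homotopic.Quotient.mk (γ.subpath (t 0) (t n))).cast h0 h1.symm) := by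
    rw [← Path.Homotopic.Quotient.mk_cast]
    congr 1
    ext s
    simp [Path.subpath, t0, hn n le_rfl]
  rw [e]
  generalize Path.Homotopic.Quotient.mk (γ.subpath (t 0) (t n)) = q
  clear key this e hn ht
  revert q h0 hi h1
  generalize γ (t 0) = z
  generalize γ (t n) = y
  rintro h1 h0 hi q
  subst h1
  subst h0
  rw [C.ret_base, Path.Homotopic.Quotient.trans_refl]

/-- A locally constant cocycle gives a permutation representation of the fundamental group. -/
theorem monodromy_rep {X : Type} [TopologicalSpace X] {b : X} {ι : Type} {U : ι → Set X}
    (C : GoodCover b U) {G : Type} [Group G] (h : ι → ι → X → G)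
    (hloc : ∀ i j x, x ∈ U i → x ∈ U j → ∀ᶠ y in 𝓝 x, h i j y = h i j x)
    (hmul : ∀ i j k x, x ∈ U i → x ∈ U j → x ∈ U k → h i j x * h j k x = h i k x)
    (hbase : ∀ i j, h i j b = 1) :
    ∃ (F : Type) (e : G → F) (ρ : FundamentalGroup X b →* Equiv.Perm F),
      Function.Injective e ∧
      ∀ i j x hi hj v, ρ (C.loop i j x hi hj) (e v) = e (h i j x * v) := by
  let _ : TopologicalSpace G := ⊥
  have : DiscreteTopology G := ⟨rfl⟩
  have hone : ∀ i x, x ∈ U i → h i i x = 1 := fun i x hx => by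
    have := hmul i i i x hx hx hx
    simpa using this
  let Z : FiberBundleCore ι X G :=
    { baseSet := U
      isOpen_baseSet := C.isOpen
      indexAt := fun x => (C.cover x).choose
      mem_baseSet_at := fun x => (C.cover x).choose_spec
      coordChange := fun i j x v => h j i x * v
      coordChange_self := fun i x hx v => by rw [hone i x hx, one_mul]
      continuousOn_coordChange := by
        rintro i j ⟨x, v⟩ ⟨⟨hi, hj⟩, -⟩
        refine ContinuousAt.continuousWithinAt ?_
        have h1 : ∀ᶠ p : X × G in 𝓝 (x, v), h j i p.1 * p.2 = h j i x * v := by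
          have a := (hloc j i x hj hi).prod_inl_nhds v
          have b : ∀ᶠ p : X × G in 𝓝 (x, v), p.2 = v :=
            (continuous_snd.continuousAt (x := (x, v))).preimage_mem_nhds
              ((isOpen_discrete ({v} : Set G)).mem_nhds rfl)
          filter_upwards [a, b] with p hp hp'
          rw [hp, hp']
        exact (continuousAt_const (y := h j i x * v)).congr
          (h1.mono fun p hp => hp.symm)
      coordChange_comp := by
        rintro i j k x ⟨⟨hi, hj⟩, hk⟩ v
        rw [← mul_assoc, hmul k j i x hk hj hi] }
  have cov : IsCoveringMap Z.proj := FiberBundle.isCoveringMap (F := G) (E := Z.Fiber)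
  -- the point over `x` with coordinate `v` in the chart `i`
  let pt (i : ι) (x : X) (v : G) : Z.proj ⁻¹' {x} := ⟨⟨x, Z.coordChange i (Z.indexAt x) x v⟩, rfl⟩
  have lift : ∀ i x y (γ : Path x y), (∀ t, γ t ∈ U i) → ∀ v,
      cov.monodromy (Path.Homotopic.Quotient.mk γ) (pt i x v) = pt i y v := by
    intro i x y γ hγ v
    let Γ : Path (pt i x v).1 (pt i y v).1 :=
      { toFun := fun t => (Z.localTriv i).toOpenPartialHomeomorph.symm (γ t, v)
        continuous_toFun := by
          refine (Z.localTriv i).toOpenPartialHomeomorph.continuousOn_symm.comp_continuous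
            (by fun_prop) fun t => ?_
          rw [FiberBundleCore.mem_localTriv_target]
          exact hγ t
        source' := by
          rw [FiberBundleCore.localTriv_symm_apply]
          change (⟨γ 0, Z.coordChange i (Z.indexAt (γ 0)) (γ 0) v⟩ : Z.TotalSpace) = _
          rw [γ.source]
        target' := by
          rw [FiberBundleCore.localTriv_symm_apply]
          change (⟨γ 1, Z.coordChange i (Z.indexAt (γ 1)) (γ 1) v⟩ : Z.TotalSpace) = _
          rw [γ.target] }
    exact cov.monodromy_eq_of_map_eq (Path.Homotopic.Quotient.mk Γ) rfl
  have lift' : ∀ i x (hi : x ∈ U i) v, cov.monodromy (C.ret i x hi) (pt i x v) = pt i b v :=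
    fun i x hi v => lift i x b _ (C.joined i x hi).choose_spec v
  have lift'' : ∀ i x (hi : x ∈ U i) v,
      cov.monodromy (C.ret i x hi).symm (pt i b v) = pt i x v := by
    intro i x hi v
    rw [← lift' i x hi, ← cov.monodromy_trans_apply, Path.Homotopic.Quotient.trans_symm, cov.monodromy_refl]
    rfl
  have hpt : ∀ i j v, pt i b v = pt j b v := by
    intro i j v
    simp only [pt, Z, hbase]
  have hpt' : ∀ i j x, x ∈ U i → x ∈ U j → ∀ v, pt j x v = pt i x (h i j x * v) := by
    intro i j x hi hj v
    simp only [pt, Z]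
    rw [← mul_assoc, hmul _ _ _ _ (C.cover x).choose_spec hi hj]
  obtain ⟨i₀, -⟩ := C.cover b
  refine ⟨Z.proj ⁻¹' {b}, fun v => pt i₀ b v, cov.monodromyPerm b, ?_, ?_⟩
  · intro v v' hv
    have h1 : (pt i₀ b v).1 = (pt i₀ b v').1 := congrArg Subtype.val hv
    simp only [pt, Z, hbase, one_mul] at h1
    exact eq_of_heq (Bundle.TotalSpace.mk.inj h1).2
  · intro i j x hi hj v
    change cov.monodromy ((C.ret j x hj).symm.trans (C.ret i x hi)) (pt i₀ b v) = _
    rw [cov.monodromy_trans_apply, hpt i₀ j, lift'' j x hj, hpt' i j x hi hj, lift' i x hi,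
      hpt i i₀]

end GoodCover
end ArtinBraid

namespace ArtinBraid
/-! ### The configuration space and its cover -/

open Topology Set

variable {n : ℕ}

/-- Plane configurations of `n + 1` points, before any condition of distinctness. -/
abbrev Tup (n : ℕ) : Type := Fin (n + 1) → Fin 2 → ℝ

/-- The position at time `t` of the particles moving on the line. -/
def pos (t : ℝ) (x : Tup n) : Fin (n + 1) → ℝ := fun k => x k 0 + t * x k 1

theorem inj_of_pos {t : ℝ} {x : Tup n} (h : Function.Injective (pos t x)) :
    Function.Injective x := by
  intro i j hij
  apply h
  simp only [pos, hij]

/-- Tuples whose positions at time `t` are increasing. -/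
def V (n : ℕ) (t : ℝ) : Set (Tup n) := {x | StrictMono (pos t x)}

theorem V_inj {t : ℝ} {x : Tup n} (h : x ∈ V n t) : Function.Injective x :=
  inj_of_pos (StrictMono.injective h)

theorem V_comp {t : ℝ} {x : Tup n} {w : Equiv.Perm (Fin (n + 1))} :
    x ∘ w ∈ V n t ↔ StrictMono (pos t x ∘ w) := Iff.rfl

theorem continuous_pos (t : ℝ) : Continuous (pos t : Tup n → _) := by
  unfold pos; fun_prop

theorem isOpen_strictMono : IsOpen {f : Fin (n + 1) → ℝ | StrictMono f} := by
  have : {f : Fin (n + 1) → ℝ | StrictMono f} =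
      ⋂ i : Fin n, {f | f i.castSucc < f i.succ} := by
    ext f; simp [Fin.strictMono_iff_lt_succ]
  rw [this]
  exact isOpen_iInter_of_finite fun i =>
    isOpen_lt (continuous_apply _) (continuous_apply _)

theorem isOpen_V (t : ℝ) : IsOpen (V n t) := isOpen_strictMono.preimage (continuous_pos t)

theorem pos_combo (t a b : ℝ) (x y : Tup n) (k : Fin (n + 1)) :
    pos t (a • x + b • y) k = a * pos t x k + b * pos t y k := by
  simp [pos]; ring

theorem convex_V_comp (t : ℝ) (w : Equiv.Perm (Fin (n + 1))) :
    Convex ℝ {x : Tup n | x ∘ w ∈ V n t} := by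
  intro x hx y hy a b ha hb hab i j hij
  have h1 := hx hij
  have h2 := hy hij
  change pos t x (w i) < pos t x (w j) at h1
  change pos t y (w i) < pos t y (w j) at h2
  change pos t (a • x + b • y) (w i) < pos t (a • x + b • y) (w j)
  rw [pos_combo, pos_combo]
  rcases ha.eq_or_lt with rfl | ha
  · have : b = 1 := by linarith
    subst this; linarith
  · nlinarith [mul_lt_mul_of_pos_left h1 ha, mul_le_mul_of_nonneg_left h2.le hb]

theorem convex_V (t : ℝ) : Convex ℝ (V n t) := convex_V_comp t 1

/-- The projection to the configuration space. -/
abbrev proj (x : Tup n) (hx : Function.Injective x) : ConfigSpace 2 (n + 1) :=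
  Quotient.mk (configSetoid 2 (n + 1)) ⟨x, hx⟩

theorem proj_eq {x y : Tup n} {hx hy} : proj x hx = proj y hy ↔
    ∃ σ : Equiv.Perm (Fin (n + 1)), y = x ∘ σ := Quotient.eq (r := configSetoid 2 (n + 1))

theorem proj_comp {x : Tup n} (hx) (σ : Equiv.Perm (Fin (n + 1))) (h) :
    proj (x ∘ σ) h = proj x hx := (proj_eq.mpr ⟨σ, rfl⟩).symm

theorem isOpenMap_mk : IsOpenMap (Quotient.mk (configSetoid 2 (n + 1))) := by
  intro O hO
  rw [← isQuotientMap_quotient_mk'.isOpen_preimage]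
  have : Quotient.mk (configSetoid 2 (n + 1)) ⁻¹' (Quotient.mk (configSetoid 2 (n + 1)) '' O) =
      ⋃ σ : Equiv.Perm (Fin (n + 1)),
        (fun x : {x : Tup n // Function.Injective x} =>
          (⟨x.1 ∘ σ, x.2.comp σ.injective⟩ : {x : Tup n // Function.Injective x})) ⁻¹' O := by
    ext x
    simp only [mem_preimage, mem_image, mem_iUnion]
    constructor
    · rintro ⟨y, hy, e⟩
      obtain ⟨σ, h⟩ := Quotient.exact e.symm
      refine ⟨σ, ?_⟩
      convert hy using 1
      exact Subtype.ext h.symm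
    · rintro ⟨σ, h⟩
      exact ⟨_, h, Quotient.sound ⟨σ⁻¹, by funext k; simp⟩⟩
  refine (congrArg IsOpen this).mpr ?_
  refine isOpen_iUnion fun σ => hO.preimage ?_
  refine Continuous.subtype_mk ?_ _
  refine continuous_pi fun k => ?_
  exact (continuous_apply (σ k)).comp continuous_subtype_val

theorem perm_unique {f : Fin (n + 1) → ℝ} {σ τ : Equiv.Perm (Fin (n + 1))}
    (hσ : StrictMono (f ∘ σ)) (hτ : StrictMono (f ∘ τ)) : σ = τ := by
  have h : Monotone (σ⁻¹ * τ : Equiv.Perm (Fin (n + 1))) := by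
    intro i j hij
    rw [← hσ.le_iff_le]
    simpa using hτ.monotone hij
  have := (Equiv.Perm.monotone_iff _).mp h
  rw [inv_mul_eq_one] at this
  exact this

/-- The sorted lift is unique. -/
theorem proj_inj {t : ℝ} {x y : Tup n} (hx : x ∈ V n t) (hy : y ∈ V n t)
    (h : proj x (V_inj hx) = proj y (V_inj hy)) : x = y := by
  obtain ⟨σ, rfl⟩ := proj_eq.mp h
  have : (1 : Equiv.Perm (Fin (n + 1))) = σ := perm_unique (f := pos t x) hx hy
  subst this; rfl

/-- The chart of the configuration space at time `t`. -/
def chart (n : ℕ) (t : ℝ) (x : V n t) : ConfigSpace 2 (n + 1) := proj x.1 (V_inj x.2)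

theorem isOpenEmbedding_chart (t : ℝ) : IsOpenEmbedding (chart n t) := by
  have hinc : Continuous
      (fun x : V n t => (⟨x.1, V_inj x.2⟩ : {x : Tup n // Function.Injective x})) :=
    Continuous.subtype_mk continuous_subtype_val _
  have hopen : IsOpenMap
      (fun x : V n t => (⟨x.1, V_inj x.2⟩ : {x : Tup n // Function.Injective x})) := by
    intro O hO
    have h1 : IsOpen (Subtype.val '' O) := (isOpen_V t).isOpenMap_subtype_val O hO
    convert h1.preimage
      (continuous_subtype_val : Continuous (Subtype.val : {x : Tup n // Function.Injective x} → _))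
      using 1
    ext y
    constructor
    · rintro ⟨z, hz, rfl⟩
      exact ⟨z, hz, rfl⟩
    · rintro ⟨z, hz, e⟩
      exact ⟨z, hz, Subtype.ext e⟩
  refine .of_continuous_injective_isOpenMap ?_ ?_ ?_
  · exact continuous_quotient_mk'.comp hinc
  · intro x y h
    exact Subtype.ext (proj_inj x.2 y.2 h)
  · exact isOpenMap_mk.comp hopen

/-- The open set of configurations with distinct positions at time `t`. -/
def U (n : ℕ) (t : ℝ) : Set (ConfigSpace 2 (n + 1)) := range (chart n t)

theorem proj_mem_U {t : ℝ} {x : Tup n} (hx : x ∈ V n t) (h) : proj x h ∈ U n t := ⟨⟨x, hx⟩, rfl⟩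

/-- The base tuple. -/
def base (n : ℕ) : Tup n := fun k => ![(k.val : ℝ), 0]

theorem base_mem (t : ℝ) : base n ∈ V n t := by
  intro i j hij
  simpa [pos, base] using hij

/-- The base configuration. -/
def bpt (n : ℕ) : ConfigSpace 2 (n + 1) := proj (base n) (V_inj (base_mem 0))

theorem simplyConnected_U (t : ℝ) : SimplyConnectedSpace (U n t) := by
  have : ContractibleSpace (V n t) := (convex_V t).contractibleSpace ⟨_, base_mem t⟩
  have : ContractibleSpace (U n t) :=
    ((isOpenEmbedding_chart t).isEmbedding.toHomeomorph).contractibleSpace_iff.mp this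
  infer_instance

theorem exists_time {x : Tup n} (hx : Function.Injective x) :
    ∃ t, Function.Injective (pos t x) := by
  have hfin : (⋃ p : Fin (n + 1) × Fin (n + 1),
      {t : ℝ | p.1 ≠ p.2 ∧ pos t x p.1 = pos t x p.2}).Finite := by
    refine finite_iUnion fun p => Set.Subsingleton.finite ?_
    rintro t ⟨hne, ht⟩ t' ⟨-, ht'⟩
    by_contra hcon
    apply hne
    apply hx
    simp only [pos] at ht ht'
    have h1 : (t - t') * (x p.1 1 - x p.2 1) = 0 := by linear_combination ht - ht'
    have h2 : x p.1 1 = x p.2 1 := by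
      rcases mul_eq_zero.mp h1 with h | h
      · exact absurd (sub_eq_zero.mp h) hcon
      · exact sub_eq_zero.mp h
    have h3 : x p.1 0 = x p.2 0 := by rw [h2] at ht; linarith
    funext k
    fin_cases k
    · exact h3
    · exact h2
  obtain ⟨t, ht⟩ := hfin.infinite_compl.nonempty
  refine ⟨t, fun i j hij => ?_⟩
  by_contra hne
  exact ht (mem_iUnion.mpr ⟨(i, j), hne, hij⟩)

theorem goodCover (n : ℕ) : GoodCover (bpt n) (U n) where
  isOpen t := (isOpenEmbedding_chart t).isOpen_range
  cover x := by
    obtain ⟨⟨x, hx⟩, rfl⟩ := Quotient.exists_rep x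
    obtain ⟨t, ht⟩ := exists_time hx
    refine ⟨t, ?_⟩
    have h : x ∘ Tuple.sort (pos t x) ∈ V n t :=
      (Tuple.monotone_sort (pos t x)).strictMono_of_injective
        (ht.comp (Tuple.sort (pos t x)).injective)
    have := proj_mem_U h (V_inj h)
    rwa [proj_comp hx] at this
  base_mem t := proj_mem_U (base_mem t) _
  joined t x hx := by
    have := simplyConnected_U (n := n) t
    obtain ⟨γ⟩ := PathConnectedSpace.joined (⟨x, hx⟩ : U n t) ⟨bpt n, proj_mem_U (base_mem t) _⟩
    exact ⟨γ.map continuous_subtype_val, fun s => (γ s).2⟩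
  homotopic t x y γ γ' h h' := by
    have := simplyConnected_U (n := n) t
    have hx : x ∈ U n t := by simpa using h 0
    have hy : y ∈ U n t := by simpa using h 1
    let δ : Path (⟨x, hx⟩ : U n t) ⟨y, hy⟩ :=
      { toFun := fun s => ⟨γ s, h s⟩
        source' := by simp
        target' := by simp }
    let δ' : Path (⟨x, hx⟩ : U n t) ⟨y, hy⟩ :=
      { toFun := fun s => ⟨γ' s, h' s⟩
        source' := by simp
        target' := by simp }
    exact (SimplyConnectedSpace.paths_homotopic δ δ').map ⟨Subtype.val, continuous_subtype_val⟩

end ArtinBraid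

namespace ArtinBraid
/-! ### The order permutations and the cocycle -/

open Topology Set

variable {n : ℕ}

/-- `w` compares the orders at times `s` and `t` of the configuration `x`. -/
def Rel (s t : ℝ) (x : ConfigSpace 2 (n + 1)) (w : Equiv.Perm (Fin (n + 1))) : Prop :=
  ∃ (y : Tup n) (hy : y ∈ V n s), y ∘ w ∈ V n t ∧ x = proj y (V_inj hy)

theorem Rel.left {s t : ℝ} {x : ConfigSpace 2 (n + 1)} {w} (h : Rel s t x w) : x ∈ U n s := by
  obtain ⟨y, hy, -, rfl⟩ := h
  exact proj_mem_U hy _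

theorem Rel.right {s t : ℝ} {x : ConfigSpace 2 (n + 1)} {w} (h : Rel s t x w) : x ∈ U n t := by
  obtain ⟨y, hy, hw, rfl⟩ := h
  have := proj_mem_U hw (V_inj hw)
  rwa [proj_comp (V_inj hy)] at this

theorem Rel.exists {s t : ℝ} {x : ConfigSpace 2 (n + 1)} (hs : x ∈ U n s) (ht : x ∈ U n t) :
    ∃ w, Rel s t x w := by
  obtain ⟨⟨y, hy⟩, rfl⟩ := hs
  obtain ⟨⟨z, hz⟩, e⟩ := ht
  obtain ⟨σ, rfl⟩ := proj_eq.mp e.symm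
  exact ⟨σ, y, hy, hz, rfl⟩

theorem Rel.unique {s t : ℝ} {x : ConfigSpace 2 (n + 1)} {v w} (hv : Rel s t x v)
    (hw : Rel s t x w) : v = w := by
  obtain ⟨y, hy, hv, rfl⟩ := hv
  obtain ⟨z, hz, hw, e⟩ := hw
  obtain rfl := proj_inj hy hz e
  exact perm_unique (f := pos t y) hv hw

theorem Rel.mul {s t u : ℝ} {x : ConfigSpace 2 (n + 1)} {v w} (hv : Rel s t x v)
    (hw : Rel t u x w) : Rel s u x (v * w) := by
  obtain ⟨y, hy, hv, rfl⟩ := hv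
  obtain ⟨z, hz, hw, e⟩ := hw
  have : y ∘ v = z := proj_inj hv hz (by rw [← e, proj_comp])
  subst this
  exact ⟨y, hy, hw, rfl⟩

theorem Rel.self {s : ℝ} {x : ConfigSpace 2 (n + 1)} (h : x ∈ U n s) : Rel s s x 1 := by
  obtain ⟨⟨y, hy⟩, rfl⟩ := h
  exact ⟨y, hy, hy, rfl⟩

theorem Rel.base (s t : ℝ) : Rel s t (bpt n) 1 :=
  ⟨ArtinBraid.base n, base_mem s, base_mem t, rfl⟩

theorem Rel.isOpen (s t : ℝ) (w : Equiv.Perm (Fin (n + 1))) :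
    IsOpen {x : ConfigSpace 2 (n + 1) | Rel s t x w} := by
  have h1 : IsOpen {y : Tup n | y ∘ w ∈ V n t} := by
    refine (isOpen_V t).preimage ?_
    exact continuous_pi fun k => continuous_apply (w k)
  have h2 := (isOpenEmbedding_chart (n := n) s).isOpenMap _ (h1.preimage continuous_subtype_val)
  convert h2 using 1
  ext x
  constructor
  · rintro ⟨y, hy, hw, rfl⟩
    exact ⟨⟨y, hy⟩, hw, rfl⟩
  · rintro ⟨⟨y, hy⟩, hw, rfl⟩
    exact ⟨y, hy, hw, rfl⟩

/-- A pair of particles crosses at most once. -/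
theorem Rel.cross {s t u : ℝ} (hst : s ≤ t) (htu : t ≤ u) {x : ConfigSpace 2 (n + 1)} {v w}
    (hv : Rel s t x v) (hw : Rel t u x w) (a b : Fin (n + 1)) (hab : a < b) (hba : v b < v a) :
    w⁻¹ a < w⁻¹ b := by
  obtain ⟨y, hy, hv, rfl⟩ := hv
  obtain ⟨z, hz, hw, e⟩ := hw
  have : y ∘ v = z := proj_inj hv hz (by rw [← e, proj_comp])
  subst this
  have h1 : pos s y (v b) < pos s y (v a) := hy hba
  have h2 : pos t y (v a) < pos t y (v b) := hv hab
  have hw' : StrictMono ((fun k => pos u y (v k)) ∘ w) := hw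
  rw [← hw'.lt_iff_lt]
  have hwa : ∀ k, w (w⁻¹ k) = k := fun k => w.apply_symm_apply k
  simp only [Function.comp, hwa]
  simp only [pos] at *
  have h3 : 0 < (t - s) * (y (v b) 1 - y (v a) 1) := by linarith
  have h4 : 0 ≤ y (v b) 1 - y (v a) 1 := by
    by_contra hcon
    push Not at hcon
    nlinarith
  nlinarith [mul_nonneg (sub_nonneg.mpr htu) h4]

open Classical in
/-- The comparison permutation. -/
noncomputable def cmpPerm (s t : ℝ) (x : ConfigSpace 2 (n + 1)) : Equiv.Perm (Fin (n + 1)) :=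
  if h : ∃ w, Rel s t x w then h.choose else 1

theorem cmpPerm_eq {s t : ℝ} {x : ConfigSpace 2 (n + 1)} {w} (h : Rel s t x w) :
    cmpPerm s t x = w := by
  have h' : ∃ w, Rel s t x w := ⟨w, h⟩
  rw [cmpPerm, dif_pos h']
  exact h'.choose_spec.unique h

theorem Rel.cmp {s t : ℝ} {x : ConfigSpace 2 (n + 1)} (hs : x ∈ U n s) (ht : x ∈ U n t) :
    Rel s t x (cmpPerm s t x) := by
  obtain ⟨w, hw⟩ := Rel.exists hs ht
  rwa [cmpPerm_eq hw]

section cocycle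
variable {G : Type} [Group G] (σ : Fin n → G)

open Classical in
/-- The cocycle attached to a family of elements satisfying the braid relations. -/
noncomputable def coc (s t : ℝ) (x : ConfigSpace 2 (n + 1)) : G :=
  if s ≤ t then permLift σ (cmpPerm s t x) else (permLift σ (cmpPerm t s x))⁻¹

theorem coc_of_le {s t : ℝ} (h : s ≤ t) (x : ConfigSpace 2 (n + 1)) :
    coc σ s t x = permLift σ (cmpPerm s t x) := if_pos h

theorem coc_swap {s t : ℝ} {x : ConfigSpace 2 (n + 1)} (hs : x ∈ U n s) :
    coc σ s t x = (coc σ t s x)⁻¹ := by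
  rcases lt_trichotomy s t with h | rfl | h
  · rw [coc_of_le σ h.le, coc, if_neg h.not_ge, inv_inv]
  · rw [coc_of_le σ le_rfl, cmpPerm_eq (Rel.self hs), permLift_one, inv_one]
  · rw [coc_of_le σ h.le, coc, if_neg h.not_ge]

theorem coc_base (s t : ℝ) : coc σ s t (bpt n) = 1 := by
  rw [coc]
  split_ifs
  · rw [cmpPerm_eq (Rel.base s t), permLift_one]
  · rw [cmpPerm_eq (Rel.base t s), permLift_one, inv_one]

theorem coc_loc (s t : ℝ) (x : ConfigSpace 2 (n + 1)) (hs : x ∈ U n s) (ht : x ∈ U n t) :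
    ∀ᶠ y in 𝓝 x, coc σ s t y = coc σ s t x := by
  have h1 := (Rel.isOpen s t (cmpPerm s t x)).mem_nhds (Rel.cmp hs ht)
  have h2 := (Rel.isOpen t s (cmpPerm t s x)).mem_nhds (Rel.cmp ht hs)
  filter_upwards [h1, h2] with y hy1 hy2
  rw [coc, coc, cmpPerm_eq hy1, cmpPerm_eq hy2]

theorem coc_mul_le
    (hc : ∀ i j : Fin n, i.val + 2 ≤ j.val → σ i * σ j = σ j * σ i)
    (hb : ∀ i j : Fin n, i.val + 1 = j.val → σ i * σ j * σ i = σ j * σ i * σ j)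
    {s t u : ℝ} (hst : s ≤ t) (htu : t ≤ u) {x : ConfigSpace 2 (n + 1)}
    (hs : x ∈ U n s) (ht : x ∈ U n t) (hu : x ∈ U n u) :
    coc σ s t x * coc σ t u x = coc σ s u x := by
  rw [coc_of_le σ hst, coc_of_le σ htu, coc_of_le σ (hst.trans htu),
    cmpPerm_eq ((Rel.cmp hs ht).mul (Rel.cmp ht hu)), permLift_mul σ hc hb]
  exact Rel.cross hst htu (Rel.cmp hs ht) (Rel.cmp ht hu)

theorem coc_mul
    (hc : ∀ i j : Fin n, i.val + 2 ≤ j.val → σ i * σ j = σ j * σ i)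
    (hb : ∀ i j : Fin n, i.val + 1 = j.val → σ i * σ j * σ i = σ j * σ i * σ j)
    (s t u : ℝ) (x : ConfigSpace 2 (n + 1))
    (hs : x ∈ U n s) (ht : x ∈ U n t) (hu : x ∈ U n u) :
    coc σ s t x * coc σ t u x = coc σ s u x := by
  rcases le_total s t with h1 | h1 <;> rcases le_total t u with h2 | h2 <;>
    rcases le_total s u with h3 | h3
  · exact coc_mul_le σ hc hb h1 h2 hs ht hu
  · exact coc_mul_le σ hc hb h1 h2 hs ht hu
  · rw [← coc_mul_le σ hc hb h3 h2 hs hu ht, coc_swap σ ht (t := u), mul_inv_cancel_right]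
  · rw [coc_swap σ ht (t := u), coc_swap σ hs (t := u), ← coc_mul_le σ hc hb h3 h1 hu hs ht]
    group
  · rw [coc_swap σ hs (t := t), ← coc_mul_le σ hc hb h1 h3 ht hs hu, inv_mul_cancel_left]
  · rw [coc_swap σ hs (t := t), coc_swap σ hs (t := u), ← coc_mul_le σ hc hb h2 h3 ht hu hs]
    group
  · rw [coc_swap σ hs (t := t), coc_swap σ ht (t := u), coc_swap σ hs (t := u),
      ← coc_mul_le σ hc hb h2 h1 hu ht hs]
    group
  · rw [coc_swap σ hs (t := t), coc_swap σ ht (t := u), coc_swap σ hs (t := u),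
      ← coc_mul_le σ hc hb h2 h1 hu ht hs]
    group

end cocycle
end ArtinBraid

namespace ArtinBraid
/-! ### The loops attached to permutations -/

open Topology Set

variable {n : ℕ}

/-- A straight path between two tuples which are sorted in the same way. -/
theorem Rel.path {s t : ℝ} {x x' : ConfigSpace 2 (n + 1)} {w} (h : Rel s t x w)
    (h' : Rel s t x' w) : ∃ γ : Path x x', ∀ r, Rel s t (γ r) w := by
  obtain ⟨y, hy, hw, rfl⟩ := h
  obtain ⟨y', hy', hw', rfl⟩ := h'
  have hconv : Convex ℝ {z : Tup n | z ∈ V n s ∧ z ∘ w ∈ V n t} :=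
    (convex_V s).inter (convex_V_comp t w)
  have hpc := hconv.isPathConnected ⟨y, hy, hw⟩
  obtain ⟨γ, hγ⟩ := hpc.joinedIn y ⟨hy, hw⟩ y' ⟨hy', hw'⟩
  refine ⟨{ toFun := fun r => proj (γ r) (V_inj (hγ r).1), continuous_toFun := ?_,
            source' := ?_, target' := ?_ }, fun r => ⟨γ r, (hγ r).1, (hγ r).2, rfl⟩⟩
  · exact continuous_quotient_mk'.comp (Continuous.subtype_mk γ.continuous _)
  · exact congrArg (Quotient.mk (configSetoid 2 (n + 1))) (Subtype.ext γ.source)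
  · exact congrArg (Quotient.mk (configSetoid 2 (n + 1))) (Subtype.ext γ.target)

theorem loop_eq_loop {s t : ℝ} {x x' : ConfigSpace 2 (n + 1)} {w} (h : Rel s t x w)
    (h' : Rel s t x' w) :
    (goodCover n).loop s t x h.left h.right = (goodCover n).loop s t x' h'.left h'.right := by
  obtain ⟨γ, hγ⟩ := h.path h'
  exact (goodCover n).loop_congr γ (fun r => (hγ r).left) (fun r => (hγ r).right) _ _ _ _

open Classical in
/-- The loop attached to two times and a permutation. -/
noncomputable def L (s t : ℝ) (w : Equiv.Perm (Fin (n + 1))) :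
    FundamentalGroup (ConfigSpace 2 (n + 1)) (bpt n) :=
  if h : ∃ x, Rel s t x w then
    (goodCover n).loop s t h.choose h.choose_spec.left h.choose_spec.right else 1

theorem loop_eq {s t : ℝ} {x : ConfigSpace 2 (n + 1)} {w} (h : Rel s t x w) (hs ht) :
    (goodCover n).loop s t x hs ht = L s t w := by
  have h' : ∃ x, Rel s t x w := ⟨x, h⟩
  rw [L, dif_pos h']
  exact loop_eq_loop h h'.choose_spec

theorem L_one (s t : ℝ) : L s t (1 : Equiv.Perm (Fin (n + 1))) = 1 := by
  rw [← loop_eq (Rel.base s t) (Rel.base s t).left (Rel.base s t).right, GoodCover.loop_base]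

theorem L_mul {s t u : ℝ} {z : Tup n} {v w : Equiv.Perm (Fin (n + 1))}
    (h1 : StrictMono (pos s z ∘ (v⁻¹ : Equiv.Perm (Fin (n + 1))))) (h2 : StrictMono (pos t z))
    (h3 : StrictMono (pos u z ∘ w)) : L s u (v * w) = L s t v * L t u w := by
  have e1 : Rel s t (proj z (V_inj h2)) v := by
    refine ⟨z ∘ (v⁻¹ : Equiv.Perm (Fin (n + 1))), h1, ?_, ?_⟩
    · have : (z ∘ (v⁻¹ : Equiv.Perm (Fin (n + 1)))) ∘ v = z := by
        funext k
        simp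
      rw [this]
      exact h2
    · rw [proj_comp (V_inj h2)]
  have e2 : Rel t u (proj z (V_inj h2)) w := ⟨z, h2, h3, rfl⟩
  rw [← loop_eq e1 e1.left e1.right, ← loop_eq e2 e2.left e2.right,
    ← loop_eq (e1.mul e2) e1.left e2.right, GoodCover.loop_mul]

theorem perm_bound (w : Equiv.Perm (Fin (n + 1))) (a b : Fin (n + 1)) :
    ((w a).val : ℝ) - (w b).val < n + 1 := by
  have h1 : ((w a).val : ℝ) < n + 1 := by exact_mod_cast (w a).2
  have h2 : (0 : ℝ) ≤ (w b).val := Nat.cast_nonneg _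
  linarith

theorem cast_lt {a b : Fin (n + 1)} (h : a < b) : (a.val : ℝ) + 1 ≤ b.val := by
  exact_mod_cast (show a.val + 1 ≤ b.val from h)

theorem strictMono_add (w : Equiv.Perm (Fin (n + 1))) {c : ℝ} (hc : (n : ℝ) + 1 ≤ c) :
    StrictMono fun k : Fin (n + 1) => ((w k).val : ℝ) + c * k.val := by
  intro a b hab
  have h1 := perm_bound w a b
  have h2 := cast_lt hab
  have h3 : (0 : ℝ) ≤ n := Nat.cast_nonneg _
  simp only
  nlinarith

theorem L_left {s t u : ℝ} (hst : s < t) (htu : t < u) (w : Equiv.Perm (Fin (n + 1))) :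
    L s u w = L t u w := by
  let K : ℝ := (n + 1) / (u - t)
  have hK : 0 ≤ K := by have : 0 < u - t := by linarith
                        positivity
  have hKt : (u - t) * K = n + 1 := mul_div_cancel₀ _ (by linarith)
  let z : Tup n := fun k => ![((w⁻¹ k).val : ℝ) + u * K * k.val, - K * k.val]
  have hz : ∀ τ k, pos τ z k = ((w⁻¹ k).val : ℝ) + ((u - τ) * K) * k.val := by
    intro τ k; simp [pos, z]; ring
  have hz' : ∀ τ, τ ≤ t → StrictMono (pos τ z) := by
    intro τ hτ
    have := strictMono_add w⁻¹ (c := (u - τ) * K) (by nlinarith)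
    intro a b hab
    rw [hz, hz]
    exact this hab
  have := L_mul (v := 1) (w := w) (z := z) (hz' s hst.le) (hz' t le_rfl) (u := u) (by
    intro a b hab
    simp only [Function.comp, hz]
    simpa using hab)
  rwa [one_mul, L_one, one_mul] at this

theorem L_right {s t u : ℝ} (hst : s < t) (htu : t < u) (v : Equiv.Perm (Fin (n + 1))) :
    L s u v = L s t v := by
  let K : ℝ := (n + 1) / (t - s)
  have hK : 0 ≤ K := by have : 0 < t - s := by linarith
                        positivity
  have hKt : (t - s) * K = n + 1 := mul_div_cancel₀ _ (by linarith)
  let z : Tup n := fun k => ![((v k).val : ℝ) - s * K * k.val, K * k.val]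
  have hz : ∀ τ k, pos τ z k = ((v k).val : ℝ) + ((τ - s) * K) * k.val := by
    intro τ k; simp [pos, z]; ring
  have hz' : ∀ τ, t ≤ τ → StrictMono (pos τ z) := by
    intro τ hτ
    have := strictMono_add v (c := (τ - s) * K) (by nlinarith)
    intro a b hab
    rw [hz, hz]
    exact this hab
  have := L_mul (v := v) (w := 1) (z := z) (s := s) (by
    intro a b hab
    simp only [Function.comp, hz]
    simpa using hab) (hz' t le_rfl) (hz' u htu.le)
  rwa [mul_one, L_one, mul_one] at this

theorem L_indep {s t s' t' : ℝ} (h : s < t) (h' : s' < t') (w : Equiv.Perm (Fin (n + 1))) :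
    L s t w = L s' t' w := by
  have key : ∀ a b c d : ℝ, a < b → b < c → c < d →
      L a d w = L b c w := fun a b c d h1 h2 h3 => by
    rw [L_left h1 (h2.trans h3), L_right h2 h3]
  have h1 : min s s' - 1 < s := by linarith [min_le_left s s']
  have h2 : min s s' - 1 < s' := by linarith [min_le_right s s']
  have h3 : t < max t t' + 1 := by linarith [le_max_left t t']
  have h4 : t' < max t t' + 1 := by linarith [le_max_right t t']
  rw [← key _ _ _ _ h1 h h3, ← key _ _ _ _ h2 h' h4]

theorem L_mul_adj (w : Equiv.Perm (Fin (n + 1))) (i : Fin n)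
    (hi : w i.castSucc < w i.succ) :
    (L 0 1 (w * adj i) : FundamentalGroup (ConfigSpace 2 (n + 1)) (bpt n)) =
      L 0 1 w * L 0 1 (adj i) := by
  have hn : (0 : ℝ) ≤ n := Nat.cast_nonneg _
  let vel : Fin (n + 1) → ℝ := fun k =>
    if k = i.succ then (n + 2) * (i.val : ℝ) - 1 / 2 else (n + 2) * (k.val : ℝ)
  let z : Tup n := fun k => ![((w k).val : ℝ), vel k]
  have hz : ∀ τ k, pos τ z k = ((w k).val : ℝ) + τ * vel k := by
    intro τ k; simp [pos, z]
  have hc : (i.castSucc : Fin (n + 1)) ≠ i.succ := by simp [Fin.ext_iff]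
  have v1 : vel i.succ = (n + 2) * (i.val : ℝ) - 1 / 2 := if_pos rfl
  have v2 : vel i.castSucc = (n + 2) * (i.val : ℝ) := by
    simp only [vel, if_neg hc, Fin.val_castSucc]
  have hvel : ∀ a b : Fin (n + 1), a < b → ¬ (a = i.castSucc ∧ b = i.succ) →
      vel a + (n + 1) ≤ vel b := by
    intro a b hab hne
    have h1 := cast_lt hab
    simp only [vel]
    split_ifs with ha hb hb
    · exact absurd (ha.trans hb.symm) hab.ne
    · subst ha
      rw [Fin.val_succ] at h1
      push_cast at h1
      nlinarith
    · subst hb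
      have h2 : a.val + 1 ≤ i.val := by
        have h3 : a.val < i.val + 1 := hab
        have h4 : a.val ≠ i.val := fun h => hne ⟨Fin.ext h, rfl⟩
        omega
      have h5 : (a.val : ℝ) + 1 ≤ i.val := by exact_mod_cast h2
      nlinarith
    · nlinarith
  have hpair : ∀ τ : ℝ, 1 ≤ τ → ∀ a b : Fin (n + 1), a < b → ¬ (a = i.castSucc ∧ b = i.succ) →
      pos τ z a < pos τ z b := by
    intro τ hτ a b hab hne
    rw [hz, hz]
    have h1 := hvel a b hab hne
    have h2 := perm_bound w a b
    nlinarith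
  have h0 : StrictMono (pos 0 z ∘ (w⁻¹ : Equiv.Perm (Fin (n + 1)))) := by
    intro a b hab
    simp only [Function.comp, hz]
    simpa using hab
  have h1 : StrictMono (pos 1 z) := by
    intro a b hab
    by_cases hne : a = i.castSucc ∧ b = i.succ
    · obtain ⟨rfl, rfl⟩ := hne
      rw [hz, hz, v1, v2]
      have := cast_lt hi
      linarith
    · exact hpair 1 le_rfl a b hab hne
  have h2 : StrictMono (pos (2 * (n + 1)) z ∘ adj i) := by
    intro a b hab
    by_cases hne : a = i.castSucc ∧ b = i.succ
    · obtain ⟨rfl, rfl⟩ := hne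
      simp only [Function.comp, adj_castSucc, adj_succ]
      rw [hz, hz, v1, v2]
      have := perm_bound w i.succ i.castSucc
      linarith
    · refine hpair _ (by linarith) _ _ (adj_lt hab hne) ?_
      rintro ⟨ha, hb⟩
      have ha' : a = i.succ := by
        apply (adj i).injective; rw [ha, adj_succ]
      have hb' : b = i.castSucc := by
        apply (adj i).injective; rw [hb, adj_castSucc]
      rw [ha', hb'] at hab
      have : i.val + 1 < i.val := hab
      omega
  have := L_mul h0 h1 h2
  rwa [L_indep (s := 0) (t := 2 * (n + 1)) (s' := 0) (t' := 1) (by linarith) one_pos,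
    L_indep (s := 1) (t := 2 * (n + 1)) (s' := 0) (t' := 1) (by linarith) one_pos] at this

end ArtinBraid

namespace ArtinBraid
/-! ### The isomorphism -/

open Topology Set

variable {n : ℕ}

theorem braid_of_mul {H : Type*} [Group H] (A : Equiv.Perm (Fin (n + 1)) → H)
    (hA : ∀ w i, w (Fin.castSucc i) < w (Fin.succ i) → A (w * adj i) = A w * A (adj i)) :
    (∀ i j : Fin n, i.val + 2 ≤ j.val → A (adj i) * A (adj j) = A (adj j) * A (adj i)) ∧
    (∀ i j : Fin n, i.val + 1 = j.val →
      A (adj i) * A (adj j) * A (adj i) = A (adj j) * A (adj i) * A (adj j)) := by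
  constructor
  · intro i j hij
    have e1 : adj j i.castSucc = i.castSucc :=
      adj_of_ne _ (by simp [Fin.ext_iff]; omega) (by simp [Fin.ext_iff]; omega)
    have e2 : adj j i.succ = i.succ :=
      adj_of_ne _ (by simp [Fin.ext_iff]; omega) (by simp [Fin.ext_iff]; omega)
    have e3 : adj i j.castSucc = j.castSucc :=
      adj_of_ne _ (by simp [Fin.ext_iff]; omega) (by simp [Fin.ext_iff]; omega)
    have e4 : adj i j.succ = j.succ :=
      adj_of_ne _ (by simp [Fin.ext_iff]; omega) (by simp [Fin.ext_iff]; omega)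
    have hcomm : adj j * adj i = adj i * adj j := by
      rw [adj, adj]
      exact (Equiv.Perm.Disjoint.commute (Equiv.Perm.disjoint_swap_swap (by
        simp [Fin.ext_iff]; omega))).eq
    rw [← hA _ _ (by rw [e3, e4]; exact Fin.castSucc_lt_succ),
      ← hA _ _ (by rw [e1, e2]; exact Fin.castSucc_lt_succ), hcomm]
  · intro i j hij
    have hm : j.castSucc = i.succ := by simp [Fin.ext_iff]; omega
    have a1 : adj j i.castSucc = i.castSucc :=
      adj_of_ne _ (by simp [Fin.ext_iff]; omega) (by simp [Fin.ext_iff]; omega)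
    have a2 : adj j i.succ = j.succ := by rw [← hm, adj_castSucc]
    have a3 : adj j j.succ = i.succ := by rw [← hm, adj_succ]
    have a4 : adj i j.succ = j.succ :=
      adj_of_ne _ (by simp [Fin.ext_iff]; omega) (by simp [Fin.ext_iff]; omega)
    have l1 : i.castSucc < i.succ := Fin.castSucc_lt_succ
    have l2 : i.succ < j.succ := by rw [← hm]; exact Fin.castSucc_lt_succ
    have l3 := l1.trans l2
    have : adj j * adj i * adj j = adj i * adj j * adj i := by
      ext k
      by_cases k1 : k = i.castSucc
      · simp [k1, a1, a2, a3, a4, adj_castSucc, adj_succ]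
      by_cases k2 : k = i.succ
      · simp [k2, a1, a2, a3, a4, adj_castSucc, adj_succ]
      by_cases k3 : k = j.succ
      · simp [k3, a1, a2, a3, a4, adj_castSucc, adj_succ]
      have b1 : adj i k = k := adj_of_ne _ k1 k2
      have b2 : adj j k = k := adj_of_ne _ (hm ▸ k2) k3
      simp [b1, b2]
    rw [← hA (adj i) j (by rw [hm, adj_succ, a4]; exact l3),
      ← hA _ i (by simpa [a1, a2, a4, adj_castSucc] using l2),
      ← hA (adj j) i (by rw [a1, a2]; exact l3),
      ← hA _ j (by simpa [hm, a1, a3, a4, adj_succ] using l1), this]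

theorem sigma_comm (i j : Fin n) (h : i.val + 2 ≤ j.val) :
    (PresentedGroup.of i * PresentedGroup.of j : PresentedGroup (braidRels n)) =
      PresentedGroup.of j * PresentedGroup.of i := by
  have : PresentedGroup.mk (braidRels n) _ = 1 :=
    PresentedGroup.one_of_mem (Or.inl ⟨i, j, h, rfl⟩)
  simp only [map_mul, map_inv] at this
  rw [mul_inv_eq_one, mul_inv_eq_iff_eq_mul] at this
  exact this

theorem sigma_braid (i j : Fin n) (h : i.val + 1 = j.val) :
    (PresentedGroup.of i * PresentedGroup.of j * PresentedGroup.of i :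
      PresentedGroup (braidRels n)) =
      PresentedGroup.of j * PresentedGroup.of i * PresentedGroup.of j := by
  have : PresentedGroup.mk (braidRels n) _ = 1 :=
    PresentedGroup.one_of_mem (Or.inr ⟨i, j, h, rfl⟩)
  simp only [map_mul, map_inv] at this
  rw [← map_mul, ← map_mul, ← map_mul, ← map_mul, ← map_inv, ← map_mul] at this
  simp only [map_mul, map_inv] at this
  rw [mul_inv_eq_one] at this
  exact this

/-- The generators act on the fundamental group. -/
theorem exists_hom (n : ℕ) : ∃ Φ : PresentedGroup (braidRels n) →*
      FundamentalGroup (ConfigSpace 2 (n + 1)) (bpt n),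
    ∀ i, Φ (PresentedGroup.of i) = L 0 1 (adj i) := by
  obtain ⟨hc, hb⟩ := braid_of_mul
    (L 0 1 : _ → FundamentalGroup (ConfigSpace 2 (n + 1)) (bpt n)) L_mul_adj
  refine ⟨PresentedGroup.toGroup (f := fun i => L 0 1 (adj i)) ?_, fun i =>
    PresentedGroup.toGroup.of _⟩
  rintro r (⟨i, j, hij, rfl⟩ | ⟨i, j, hij, rfl⟩)
  · simp only [map_mul, map_inv, FreeGroup.lift_apply_of]
    rw [mul_inv_eq_one, mul_inv_eq_iff_eq_mul]
    exact hc i j hij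
  · simp only [map_mul, map_inv, FreeGroup.lift_apply_of]
    rw [mul_inv_eq_one]
    exact hb i j hij

theorem exists_config (w : Equiv.Perm (Fin (n + 1))) :
    ∃ x : ConfigSpace 2 (n + 1), Rel 0 1 x w := by
  let z : Tup n := fun k => ![(k.val : ℝ), ((w⁻¹ k).val : ℝ) - k.val]
  have h0 : z ∈ V n 0 := by
    intro a b hab
    simpa [pos, z] using hab
  refine ⟨proj z (V_inj h0), z, h0, ?_, rfl⟩
  intro a b hab
  simpa [pos, z] using hab

theorem main (n : ℕ) : Nonempty (PresentedGroup (braidRels n) ≃*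
    FundamentalGroup (ConfigSpace 2 (n + 1)) (bpt n)) := by
  obtain ⟨Φ, hΦ⟩ := exists_hom n
  refine ⟨MulEquiv.ofBijective Φ ⟨?_, ?_⟩⟩
  · obtain ⟨F, e, ρ, he, hρ⟩ := (goodCover n).monodromy_rep
      (coc (fun i : Fin n => (PresentedGroup.of i : PresentedGroup (braidRels n))))
      (coc_loc _) (coc_mul _ sigma_comm sigma_braid) (coc_base _)
    have hgen : ∀ i v, ρ (Φ (PresentedGroup.of i)) (e v) = e (PresentedGroup.of i * v) := by
      intro i v
      obtain ⟨x, hx⟩ := exists_config (adj i)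
      rw [hΦ, ← loop_eq hx hx.left hx.right, hρ, coc_of_le _ zero_le_one, cmpPerm_eq hx]
      have := permLift_mul_adj
        (fun i : Fin n => (PresentedGroup.of i : PresentedGroup (braidRels n)))
        sigma_comm sigma_braid 1 i Fin.castSucc_lt_succ
      rw [one_mul, permLift_one, one_mul] at this
      rw [this]
    have hall : ∀ g v, ρ (Φ g) (e v) = e (g * v) := by
      intro g
      have hg : g ∈ Subgroup.closure (range (PresentedGroup.of (rels := braidRels n))) := by
        rw [PresentedGroup.closure_range_of]; trivial
      induction hg using Subgroup.closure_induction with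
      | mem x hx => obtain ⟨i, rfl⟩ := hx; exact hgen i
      | one => intro v; rw [map_one, map_one, Equiv.Perm.one_apply, one_mul]
      | mul a b _ _ ha hb =>
        intro v
        rw [map_mul, map_mul, Equiv.Perm.mul_apply, hb, ha, mul_assoc]
      | inv a _ ha =>
        intro v
        rw [map_inv, map_inv, Equiv.Perm.inv_eq_iff_eq, ha, mul_inv_cancel_left]
    rw [injective_iff_map_eq_one]
    intro g hg
    have := hall g 1
    rw [hg, map_one, Equiv.Perm.one_apply, mul_one] at this
    exact (he this).symm
  · rw [← MonoidHom.range_eq_top]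
    refine (goodCover n).generated _ ?_
    have hA : ∀ w, L 0 1 w ∈ Φ.range := by
      intro w
      induction w using perm_ascent_induction with
      | h1 => rw [L_one]; exact one_mem _
      | hs w i hi ih =>
        rw [L_mul_adj w i hi]
        exact mul_mem ih ⟨_, hΦ i⟩
    have hle : ∀ s t : ℝ, s < t → ∀ x hs ht, (goodCover n).loop s t x hs ht ∈ Φ.range := by
      intro s t hst x hs ht
      rw [loop_eq (Rel.cmp hs ht), L_indep hst one_pos]
      exact hA _
    intro s t x hs ht
    rcases lt_trichotomy s t with h | rfl | h
    · exact hle s t h x hs ht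
    · rw [GoodCover.loop_self]; exact one_mem _
    · rw [GoodCover.loop_inv]; exact inv_mem (hle t s h x ht hs)

end ArtinBraid

/-- **Artin's theorem (planar case).**
The fundamental group of the unordered configuration space of `N` distinct points in the
plane, based at any point, is isomorphic to the braid group `B_N`. -/
theorem artin_braid_group (N : ℕ) (hN : 1 ≤ N) (X : ConfigSpace 2 N) :
    Nonempty (FundamentalGroup (ConfigSpace 2 N) X ≃* BraidGroup N) := by
  obtain ⟨n, rfl⟩ : ∃ n, N = n + 1 := ⟨N - 1, by omega⟩
  obtain ⟨e⟩ := ArtinBraid.main n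
  obtain ⟨t, ht⟩ := (ArtinBraid.goodCover n).cover X
  obtain ⟨γ, -⟩ := (ArtinBraid.goodCover n).joined t X ht
  exact ⟨(FundamentalGroup.fundamentalGroupMulEquivOfPath γ).trans e.symm⟩
end

section
/- For every N ≥ 1 and every dimension d ≥ 3, the fundamental group of the unordered configuration space C_N(ℝ^d) of N distinct points in ℝ^d, based at any point, is isomorphic to the symmetric group on N letters: for every X ∈ C_N(ℝ^d) there exists a group isomorphism FundamentalGroup(C_N(ℝ^d), X) ≃ S_N (the permutation group of Fin N). -/
open Set unitInterval in
/-- Any path in a normed space is uniformly close to a polygonal path. -/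
theorem exists_polygonal_approx {V : Type*} [NormedAddCommGroup V] [NormedSpace ℝ V]
    {x y : V} (γ : Path x y) {ε : ℝ} (hε : 0 < ε) :
    ∃ g : Path x y, ∃ F : Set V, F.Finite ∧
      (∀ t, ∃ u ∈ F, ∃ v ∈ F, g t ∈ Submodule.span ℝ {u, v}) ∧
      ∀ t, g t ∈ Metric.ball (γ t) ε := by
  have huc : UniformContinuous γ := CompactSpace.uniformContinuous_of_continuous γ.continuous
  obtain ⟨δ, hδ, hγ⟩ := Metric.uniformContinuous_iff.1 huc ε hε
  obtain ⟨m, hm⟩ := exists_nat_one_div_lt hδ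
  set n : ℕ := m + 1 with hn
  have hn0 : (0 : ℝ) < n := by positivity
  have hm' : 1 / (n : ℝ) < δ := by simpa [hn] using hm
  let w : ℕ → V := fun i => γ.extend (i / n)
  let f : ℝ → V := fun t => ∑ i ∈ Finset.range (n + 1), max 0 (1 - |n * t - i|) • w i
  have hf : Continuous f := by fun_prop
  have key : ∀ (k : ℕ) (t : ℝ), k < n → (k : ℝ) ≤ n * t → n * t ≤ k + 1 →
      f t = (1 - (n * t - k)) • w k + (n * t - k) • w (k + 1) := by
    intro k t hk h1 h2
    have hsub : ({k, k + 1} : Finset ℕ) ⊆ Finset.range (n + 1) := by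
      intro i hi
      simp only [Finset.mem_insert, Finset.mem_singleton] at hi
      simp only [Finset.mem_range]; omega
    have : f t = ∑ i ∈ ({k, k + 1} : Finset ℕ), max 0 (1 - |n * t - i|) • w i := by
      symm
      apply Finset.sum_subset hsub
      intro i _ hi
      simp only [Finset.mem_insert, Finset.mem_singleton, not_or] at hi
      have : max 0 (1 - |n * t - (i : ℝ)|) = 0 := by
        apply max_eq_left
        rcases lt_or_gt_of_ne hi.1 with h | h
        · have : (i : ℝ) + 1 ≤ k := by exact_mod_cast h
          have := le_abs_self (n * t - (i : ℝ)); linarith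
        · have : (k : ℝ) + 2 ≤ i := by
            have : k + 2 ≤ i := by omega
            exact_mod_cast this
          have := neg_le_abs (n * t - (i : ℝ)); linarith
      rw [this, zero_smul]
    rw [this, Finset.sum_pair (by omega)]
    congr 2
    · rw [abs_of_nonneg (by linarith), max_eq_right (by linarith)]
    · push_cast
      rw [abs_of_nonpos (by linarith), max_eq_right (by linarith)]; ring
  have loc : ∀ t : I, ∃ k : ℕ, k < n ∧ (k : ℝ) ≤ n * t ∧ (n * t : ℝ) ≤ k + 1 := by
    intro t
    have ht0 := t.2.1
    have ht1 := t.2.2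
    by_cases h : (t : ℝ) = 1
    · refine ⟨m, by omega, ?_, ?_⟩ <;> rw [h] <;> simp [hn]
    · have hlt : (t : ℝ) < 1 := lt_of_le_of_ne ht1 h
      refine ⟨⌊(n * t : ℝ)⌋₊, ?_, Nat.floor_le (by positivity), (Nat.lt_floor_add_one _).le⟩
      rw [Nat.floor_lt (by positivity)]
      nlinarith
  have f0 : f 0 = x := by
    rw [key 0 0 (by omega) (by simp) (by simp)]; simp [w]
  have f1 : f 1 = y := by
    rw [key m 1 (by omega) (by simp [hn]) (by simp [hn])]
    have : ((m : ℝ) + 1) / n = 1 := by rw [hn]; push_cast; exact div_self (by positivity)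
    have h2 : (n : ℝ) * 1 - m = 1 := by simp [hn]
    rw [h2]
    simp [w, this]
  refine ⟨⟨⟨fun t => f t, by fun_prop⟩, by simpa using f0, by simpa using f1⟩,
    w '' (Finset.range (n + 1) : Set ℕ), (Finset.finite_toSet _).image _, ?_, ?_⟩
  · intro t
    obtain ⟨k, hk, h1, h2⟩ := loc t
    refine ⟨w k, ⟨k, by simp; omega, rfl⟩, w (k + 1), ⟨k + 1, by simp; omega, rfl⟩, ?_⟩
    change f t ∈ _
    rw [key k t hk h1 h2, Submodule.mem_span_pair]
    exact ⟨_, _, rfl⟩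
  · intro t
    obtain ⟨k, hk, h1, h2⟩ := loc t
    change f t ∈ _
    rw [key k t hk h1 h2]
    have hball : ∀ j : ℕ, j ≤ n → |(n * t : ℝ) - j| ≤ 1 → w j ∈ Metric.ball (γ t) ε := by
      intro j hj hjt
      have hmem : (j / n : ℝ) ∈ I := ⟨by positivity, by
        rw [div_le_one hn0]; exact_mod_cast hj⟩
      have : w j = γ ⟨_, hmem⟩ := Path.extend_apply _ hmem
      rw [this, Metric.mem_ball]
      apply hγ
      rw [Subtype.dist_eq, Real.dist_eq]
      have : (j / n : ℝ) - t = -(((n * t : ℝ) - j) / n) := by field_simp; ring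
      change |(j / n : ℝ) - t| < δ
      rw [this, abs_neg, abs_div, abs_of_pos hn0]
      exact lt_of_le_of_lt (by gcongr) hm'
    refine convex_ball (γ t) ε (hball k hk.le ?_) (hball (k + 1) hk ?_) (by linarith) (by linarith)
      (by ring)
    · rw [abs_le]; constructor <;> linarith
    · push_cast
      rw [abs_le]; constructor <;> linarith

/-- A point in general position with respect to finitely many subspaces and vectors. -/
theorem exists_generic_point {V : Type*} [AddCommGroup V] [Module ℝ V]
    {ι : Type*} [Finite ι] (W : ι → Submodule ℝ V)
    (hW : ∀ i u v, W i ⊔ Submodule.span ℝ {u, v} ≠ ⊤) {F : Set V} (hF : F.Finite) :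
    ∃ p, ∀ i, ∀ u ∈ F, ∀ v ∈ F, p ∉ W i ⊔ Submodule.span ℝ {u, v} := by
  by_contra! hcon
  have : Finite F := hF
  obtain ⟨⟨i, u, v⟩, h⟩ := Subspace.exists_eq_top_of_iUnion_eq_univ (k := ℝ) (E := V)
    (p := fun a : ι × F × F => W a.1 ⊔ Submodule.span ℝ {(a.2.1 : V), (a.2.2 : V)}) (by
      rw [Set.eq_univ_iff_forall]
      intro p
      obtain ⟨i, u, hu, v, hv, h⟩ := hcon p
      exact Set.mem_iUnion.2 ⟨(i, ⟨u, hu⟩, ⟨v, hv⟩), h⟩)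
  exact hW _ _ _ h

theorem cone_notMem {V : Type*} [AddCommGroup V] [Module ℝ V] (W : Submodule ℝ V)
    {p u v g : V} (hp : p ∉ W ⊔ Submodule.span ℝ {u, v}) (hg : g ∈ Submodule.span ℝ {u, v})
    (hgW : g ∉ W) (a : ℝ) : a • p + (1 - a) • g ∉ W := by
  intro h
  by_cases ha : a = 0
  · subst ha; simp at h; exact hgW h
  · apply hp
    have h1 : a • p ∈ W ⊔ Submodule.span ℝ {u, v} := by
      have := Submodule.sub_mem _ (Submodule.mem_sup_left (T := Submodule.span ℝ {u, v}) h)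
        (Submodule.mem_sup_right (S := W) (Submodule.smul_mem _ (1 - a) hg))
      simpa using this
    exact (Submodule.smul_mem_iff _ ha).1 h1

/-- The complement of finitely many subspaces of codimension at least three is simply connected. -/
theorem isSimplyConnected_compl_subspaces {V : Type*} [NormedAddCommGroup V] [NormedSpace ℝ V]
    [FiniteDimensional ℝ V] {ι : Type*} [Finite ι] (W : ι → Submodule ℝ V)
    (hW : ∀ i u v, W i ⊔ Submodule.span ℝ {u, v} ≠ ⊤) :
    IsSimplyConnected {x : V | ∀ i, x ∉ W i} := by
  set U : Set V := {x : V | ∀ i, x ∉ W i} with hU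
  have hUo : IsOpen U := by
    have : U = ⋂ i, (W i : Set V)ᶜ := by ext; simp [hU]
    rw [this]
    exact isOpen_iInter_of_finite fun i => (W i).closed_of_finiteDimensional.isOpen_compl
  rw [isSimplyConnected_iff_exists_homotopy_refl_forall_mem]
  constructor
  · obtain ⟨p₀, hp₀⟩ := exists_generic_point W hW (F := {0}) (by simp)
    refine isPathConnected_iff.2 ⟨⟨p₀, fun i h => hp₀ i 0 rfl 0 rfl (Submodule.mem_sup_left h)⟩, ?_⟩
    intro x hx y hy
    obtain ⟨p, hp⟩ := exists_generic_point W hW (F := {x, y}) (by simp)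
    have hj : ∀ z ∈ ({x, y} : Set V), z ∈ U → JoinedIn U p z := by
      intro z hz hzU
      apply JoinedIn.of_segment_subset
      rintro _ ⟨a, b, ha, hb, hab, rfl⟩ i
      obtain rfl : b = 1 - a := by linarith
      exact cone_notMem (W i) (hp i z hz z hz) (Submodule.subset_span (by simp)) (hzU i) a
    exact (hj x (by simp) hx).symm.trans (hj y (by simp) hy)
  · intro x γ hγ
    obtain ⟨ε, hε, hball⟩ : ∃ ε > 0, ∀ t, Metric.ball (γ t) ε ⊆ U := by
      have hc : IsCompact (Set.range γ) := isCompact_range γ.continuous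
      obtain ⟨ε, hε, h⟩ := hc.exists_thickening_subset_open hUo (by rintro _ ⟨t, rfl⟩; exact hγ t)
      exact ⟨ε, hε, fun t => (Metric.ball_subset_thickening (Set.mem_range_self t) ε).trans h⟩
    obtain ⟨g, F, hF, hgF, hgγ⟩ := exists_polygonal_approx γ hε
    obtain ⟨p, hp⟩ := exists_generic_point W hW hF
    let S : Set V := {v | ∀ a ∈ Set.Icc (0 : ℝ) 1, a • p + (1 - a) • v ∈ U}
    have hSU : S ⊆ U := fun v hv => by simpa using hv 0 (by simp)
    have hgS : ∀ t, g t ∈ S := by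
      intro t a _ i
      obtain ⟨u, hu, v, hv, h⟩ := hgF t
      exact cone_notMem (W i) (hp i u hu v hv) h (hball t (hgγ t) i) a
    have hstar : StarConvex ℝ p S := by
      intro y hy a b ha hb hab c hc
      have := hy (c + (1 - c) * a) ⟨by nlinarith [hc.1, hc.2, mul_nonneg (sub_nonneg.2 hc.2) ha],
        by
          have : a ≤ 1 := by linarith
          nlinarith [mul_nonneg (sub_nonneg.2 hc.2) (sub_nonneg.2 this)]⟩
      convert! this using 1
      obtain rfl : b = 1 - a := by linarith
      module
    have hScon : ContractibleSpace S := hstar.contractibleSpace ⟨g 0, hgS 0⟩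
    have hSsc : IsSimplyConnected S := by
      change SimplyConnectedSpace S
      infer_instance
    obtain ⟨G, hG⟩ := (isSimplyConnected_iff_exists_homotopy_refl_forall_mem.1 hSsc).2 x g hgS
    let H : γ.Homotopy g :=
      { toHomotopy := ContinuousMap.Homotopy.affine _ _
        prop' := by
          intro t s hs
          rcases hs with rfl | hs
          · simp
          · rw [Set.mem_singleton_iff] at hs
            subst hs; simp }
    have hH : ∀ z, H z ∈ U := by
      rintro ⟨t, s⟩
      apply hball s
      have : H (t, s) = AffineMap.lineMap (γ s) (g s) (t : ℝ) := by
        change ContinuousMap.Homotopy.affine _ _ (t, s) = _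
        simp
      rw [this]
      exact (convex_ball (γ s) ε).lineMap_mem (Metric.mem_ball_self hε) (hgγ s) t.2
    refine ⟨H.trans G, fun z => ?_⟩
    rw [Path.Homotopy.trans_apply]
    split_ifs
    · exact hH _
    · exact hSU (hG _)

/-- The ordered configuration space. -/
abbrev OrdConf (d N : ℕ) : Type := {x : Fin N → Fin d → ℝ // Function.Injective x}

theorem simplyConnected_ordConf (d N : ℕ) (hd : 3 ≤ d) : SimplyConnectedSpace (OrdConf d N) := by
  let L : {q : Fin N × Fin N // q.1 ≠ q.2} → ((Fin N → Fin d → ℝ) →ₗ[ℝ] (Fin d → ℝ)) :=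
    fun q => LinearMap.proj (R := ℝ) (φ := fun _ : Fin N => Fin d → ℝ) q.1.1 -
      LinearMap.proj (R := ℝ) (φ := fun _ : Fin N => Fin d → ℝ) q.1.2
  have h := isSimplyConnected_compl_subspaces (fun q => LinearMap.ker (L q)) (by
    intro q u v htop
    have hsurj : LinearMap.range (L q) = ⊤ := by
      rw [LinearMap.range_eq_top]
      intro y
      refine ⟨Pi.single q.1.1 y, ?_⟩
      simp [L, Pi.single_eq_of_ne (Ne.symm q.2)]
    have h2 : Submodule.span ℝ {L q u, L q v} = ⊤ := by
      have := congrArg (Submodule.map (L q)) htop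
      rw [Submodule.map_sup, Submodule.map_span, Submodule.map_top, hsurj, Set.image_pair] at this
      rw [← this]
      symm
      rw [sup_eq_right]
      rintro _ ⟨w, hw, rfl⟩
      have : L q w = 0 := hw
      rw [this]; exact Submodule.zero_mem _
    have h3 : Module.finrank ℝ (Submodule.span ℝ {L q u, L q v}) ≤ 2 := by
      classical
      have := finrank_span_finset_le_card (R := ℝ) ({L q u, L q v} : Finset (Fin d → ℝ))
      have h4 := Finset.card_le_two (a := L q u) (b := L q v)
      rw [Finset.coe_pair] at this
      exact this.trans h4
    rw [h2, finrank_top, Module.finrank_fin_fun] at h3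
    omega)
  have heq : {x : Fin N → Fin d → ℝ | ∀ q, x ∉ LinearMap.ker (L q)}
      = {x | Function.Injective x} := by
    ext x
    simp only [Set.mem_ofPred_eq, LinearMap.mem_ker, L, LinearMap.sub_apply, LinearMap.proj_apply,
      sub_eq_zero]
    constructor
    · intro hx i j hij
      by_contra hne
      exact hx ⟨(i, j), hne⟩ hij
    · intro hx q hq
      exact q.2 (hx hq)
  rw [heq] at h
  exact h

/-- The permutation action on ordered configurations. -/
instance ordConfAction (d N : ℕ) : MulAction (Equiv.Perm (Fin N)) (OrdConf d N) where
  smul σ x := ⟨x.1 ∘ ⇑σ⁻¹, x.2.comp (Equiv.injective _)⟩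
  one_smul x := by apply Subtype.ext; rfl
  mul_smul σ τ x := by
    apply Subtype.ext
    change x.1 ∘ ⇑(σ * τ)⁻¹ = (x.1 ∘ ⇑τ⁻¹) ∘ ⇑σ⁻¹
    rw [mul_inv_rev]; rfl

theorem ordConf_smul_val {d N : ℕ} (σ : Equiv.Perm (Fin N)) (x : OrdConf d N) :
    (σ • x).1 = x.1 ∘ ⇑σ⁻¹ := rfl

instance ordConfContinuous (d N : ℕ) :
    ContinuousConstSMul (Equiv.Perm (Fin N)) (OrdConf d N) where
  continuous_const_smul σ := by
    refine Continuous.subtype_mk (f := fun x : OrdConf d N => x.1 ∘ ⇑σ⁻¹) ?_ _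
    exact continuous_pi fun i => (continuous_apply _).comp continuous_subtype_val

theorem ordConf_isOpen (d N : ℕ) :
    IsOpen {x : Fin N → Fin d → ℝ | Function.Injective x} := by
  have : {x : Fin N → Fin d → ℝ | Function.Injective x}
      = ⋂ i, ⋂ j, ⋂ _ : i ≠ j, {x | x i ≠ x j} := by
    ext x
    simp only [Set.mem_ofPred_eq, Set.mem_iInter]
    exact ⟨fun h i j hij he => hij (h he), fun h i j he => by
      by_contra hne; exact h i j hne he⟩
  rw [this]
  exact isOpen_iInter_of_finite fun i => isOpen_iInter_of_finite fun j =>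
    isOpen_iInter_of_finite fun _ => isOpen_ne_fun (continuous_apply i) (continuous_apply j)

theorem configSpace_covering (d N : ℕ) :
    IsQuotientCoveringMap (Quotient.mk (configSetoid d N)) (Equiv.Perm (Fin N)) := by
  have : LocallyCompactSpace (OrdConf d N) := (ordConf_isOpen d N).locallyCompactSpace
  have : IsCancelSMul (Equiv.Perm (Fin N)) (OrdConf d N) := by
    rw [isCancelSMul_iff_eq_one_of_smul_eq]
    intro σ x h
    have h1 := congrArg Subtype.val h
    rw [ordConf_smul_val] at h1
    rw [← inv_eq_one]
    ext1 i
    exact x.2 (congrFun h1 i)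
  refine isQuotientMap_quotient_mk'.isQuotientCoveringMap_of_properlyDiscontinuousSMul ?_
  intro x y
  rw [MulAction.mem_orbit_iff]
  constructor
  · intro h
    obtain ⟨σ, hσ⟩ : ∃ σ : Equiv.Perm (Fin N), y.1 = x.1 ∘ ⇑σ := Quotient.exact h
    refine ⟨σ, Subtype.ext ?_⟩
    rw [ordConf_smul_val, hσ]
    funext i; simp
  · rintro ⟨σ, rfl⟩
    apply Quotient.sound
    refine ⟨σ, ?_⟩
    rw [ordConf_smul_val]
    funext i; simp


/-- For `d ≥ 3`, the fundamental group of the unordered configuration space of `N` distinct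
points in `ℝ^d`, based at any point, is isomorphic to the symmetric group `S_N`. -/
theorem configSpace_pi1_symmetric (d N : ℕ) (hd : 3 ≤ d) (hN : 1 ≤ N)
    (X : ConfigSpace d N) :
    Nonempty (FundamentalGroup (ConfigSpace d N) X ≃* Equiv.Perm (Fin N)) := by
  have := simplyConnected_ordConf d N hd
  obtain ⟨e, he⟩ := Quotient.exists_rep X
  exact ⟨((configSpace_covering d N).fundamentalGroupEquiv ⟨e, he⟩).trans
    (MulEquiv.inv' (Equiv.Perm (Fin N))).symm⟩
end
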